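/- Let F = ⋃_{j=1}^J φ_j(F) ⊂ ℝ^d be as in the main theorem (similitudes with ratios r_j, D the Moran root, dim[F] = d, Tileset, Nontriviality and Pearse–Winter Conditions, D > d−1), but now assume T_0 = C ∖ ⋃_j φ_j(C) has finitely many connected components G_1,…,G_Q, each diphase Steiner-like with inradius g_q and coefficients κ_0(G_q),…,κ_d(G_q). If Φ is of non-lattice type, then F is Minkowski measurable with Minkowski content M(F) = (∑_{q=1}^Q ∑_{m=0}^d (g_q^{D−m}/(D−m)) κ_m(G_q)) / (∑_{j=1}^J r_j^D log r_j^{−1}); if Φ is of lattice type, then F is not Minkowski measurable but the average Minkowski content exists and is given by the same expression. -/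

import Mathlib

open MeasureTheory Filter

/-- The inner `ε`-neighborhood of a set `G`:
`{x ∈ closure G | dist(x, Gᶜ) ≤ ε}`. -/
def innerNbhd {d : ℕ} (G : Set (EuclideanSpace ℝ (Fin d))) (ε : ℝ) :
    Set (EuclideanSpace ℝ (Fin d)) :=
  {x ∈ closure G | Metric.infDist x Gᶜ ≤ ε}

/-!
Put `Z(t) = e^{(d-D)t} vol(F_ε ∩ C)` with `ε = e^{-t}`. Since `∂C ⊆ F`, the set `F_ε ∩ φⱼ(C)` is the
`φⱼ`-image of `F_{ε/rⱼ} ∩ C`, and `F_ε ∩ G_q` is, up to a null set, the inner `ε`-neighborhood of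
`G_q`; hence `Z` solves the renewal equation `Z(t) = ∑ⱼ rⱼ^D Z(t - log rⱼ⁻¹) + z(t)`, where `z` is
explicit and decays because `D > d - 1`. The remaining part `F_ε \ C` has volume `O(ε)`, negligible
for the same reason. Renewal theory gives the limit of `Z` in the non-lattice case, and of its
averages in every case, as `∫ z / ∑ⱼ rⱼ^D log rⱼ⁻¹`.

If all delays are multiples of `a` and `Z` converges to `M`, then summing the equation along
`t + aℤ` shows that the periodization of `z` is a constant multiple of `M`. Just to the
right of a point of `aℤ` this periodization is a combination of the exponentials `e^{(m-D)t}`,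
`0 ≤ m ≤ d`. As `d - 1 < D < d`, none of them is constant, so `M = 0`.
-/

section WeightedShifts

open Set Real Topology

lemma exists_pos_forall_mem_Icc {ι : Type*} [Finite ι] {τ : ι → ℝ} (hτ : ∀ j, 0 < τ j) :
    ∃ δ M, 0 < δ ∧ δ ≤ M ∧ ∀ j, τ j ∈ Icc δ M := by
  obtain ⟨M, hM⟩ := (finite_range τ).bddAbove
  have hM j : τ j ≤ M := hM ⟨j, rfl⟩
  rcases isEmpty_or_nonempty ι with hι | hι
  · exact ⟨1, 1, one_pos, le_rfl, fun j => hι.elim j⟩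
  · obtain ⟨i, hi⟩ := Finite.exists_min τ
    exact ⟨τ i, M, hτ i, hM i, fun j => ⟨hi j, hM j⟩⟩

variable {ι : Type*} [Fintype ι] {p τ : ι → ℝ}

lemma nonpos_of_le_sum_shift (hp : ∀ j, 0 ≤ p j) {δ M a : ℝ} (hδ : 0 < δ)
    (hτ : ∀ j, τ j ∈ Icc δ M) {u : ℝ → ℝ} (hu : ∀ t, a < t → u t ≤ ∑ j, p j * u (t - τ j))
    (ha : ∀ t ∈ Icc (a - M) a, u t ≤ 0) {t : ℝ} (ht : a - M ≤ t) : u t ≤ 0 := by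
  have induct : ∀ n : ℕ, ∀ t ∈ Icc (a - M) (a + n * δ), u t ≤ 0 := by
    intro n
    induction n with
    | zero => simpa using ha
    | succ n ih =>
      rintro t ⟨hMt, htn⟩
      rcases le_or_gt t a with hta | hat
      · exact ha t ⟨hMt, hta⟩
      · refine (hu t hat).trans (Finset.sum_nonpos fun j _ => ?_)
        obtain ⟨hδj, hjM⟩ := hτ j
        push_cast at htn
        exact mul_nonpos_of_nonneg_of_nonpos (hp j) (ih _ ⟨by linarith, by linarith⟩)
  obtain ⟨n, hn⟩ := exists_nat_ge ((t - a) / δ)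
  rw [div_le_iff₀ hδ] at hn
  exact induct n t ⟨ht, by linarith⟩

lemma sum_mul_sub (hsum : ∑ j, p j = 1) (x : ℝ) (y : ι → ℝ) :
    ∑ j, p j * (x - y j) = x - ∑ j, p j * y j := by
  simp only [mul_sub, Finset.sum_sub_distrib, ← Finset.sum_mul, hsum, one_mul]

lemma sum_mul_pos (hp : ∀ j, 0 < p j) (hsum : ∑ j, p j = 1) (hτ : ∀ j, 0 < τ j) :
    0 < ∑ j, p j * τ j := by
  have : Nonempty ι := by
    by_contra hι
    simp [not_nonempty_iff.1 hι] at hsum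
  exact Finset.sum_pos (fun j _ => mul_pos (hp j) (hτ j)) Finset.univ_nonempty

lemma one_lt_sum_mul_exp (hp : ∀ j, 0 < p j) (hsum : ∑ j, p j = 1) (hτ : ∀ j, 0 < τ j) :
    1 < ∑ j, p j * exp (τ j) := by
  calc 1 < ∑ j, p j * τ j + ∑ j, p j := by rw [hsum]; linarith [sum_mul_pos hp hsum hτ]
    _ = ∑ j, p j * (τ j + 1) := by simp only [mul_add, Finset.sum_add_distrib, mul_one]
    _ ≤ ∑ j, p j * exp (τ j) := Finset.sum_le_sum fun j _ =>
      mul_le_mul_of_nonneg_left (add_one_le_exp _) (hp j).le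

/-- For a suitable `c`, the function `f + c e^{-βt}` satisfies the inequality without the error
term, so that the maximum principle bounds it. -/
lemma exists_forall_le_of_le_sum_shift_add (hp : ∀ j, 0 < p j) (hsum : ∑ j, p j = 1)
    (hτ : ∀ j, 0 < τ j) {f : ℝ → ℝ} {A β K : ℝ} (hβ : 0 < β) (hK : 0 ≤ K)
    (hA : ∀ t ≤ 0, f t ≤ A)
    (hf : ∀ t, 0 < t → f t ≤ ∑ j, p j * f (t - τ j) + K * exp (-(β * t))) :
    ∃ B, ∀ t, f t ≤ B := by
  obtain ⟨δ, M, hδ, hδM, hM⟩ := exists_pos_forall_mem_Icc hτ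
  set s := ∑ j, p j * exp (β * τ j) with hs
  have hs1 : 0 < s - 1 := sub_pos.2 (one_lt_sum_mul_exp hp hsum fun j => mul_pos hβ (hτ j))
  obtain ⟨c, hc0, hc⟩ : ∃ c ≥ 0, c * (s - 1) = K :=
    ⟨K / (s - 1), div_nonneg hK hs1.le, div_mul_cancel₀ K hs1.ne'⟩
  set B := A + c * exp (β * M)
  have shift (t : ℝ) : ∑ j, p j * (f (t - τ j) + c * exp (-(β * (t - τ j))) - B) =
      ∑ j, p j * f (t - τ j) + c * exp (-(β * t)) * s - B := by
    have hexp j : exp (-(β * (t - τ j))) = exp (-(β * t)) * exp (β * τ j) := by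
      rw [← exp_add]; ring_nf
    simp only [hexp]
    simp only [mul_sub, mul_add, Finset.sum_sub_distrib, Finset.sum_add_distrib,
      ← Finset.sum_mul, hsum, one_mul, hs, Finset.mul_sum, mul_left_comm, mul_assoc]
  refine ⟨B, fun t => ?_⟩
  rcases le_or_gt t 0 with ht | ht
  · exact (hA t ht).trans (le_add_of_nonneg_right (by positivity))
  have corrected : f t + c * exp (-(β * t)) - B ≤ 0 := by
    refine nonpos_of_le_sum_shift (u := fun t => f t + c * exp (-(β * t)) - B) (a := 0)
      (fun j => (hp j).le) hδ hM (fun t ht => ?_) (fun t ht => ?_) (by linarith)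
    · rw [shift]
      linear_combination hf t ht - exp (-(β * t)) * hc
    · have : c * exp (-(β * t)) ≤ c * exp (β * M) :=
        mul_le_mul_of_nonneg_left (exp_le_exp.2 (by nlinarith [ht.1])) hc0
      linarith [hA t ht.2]
  linarith [mul_nonneg hc0 (exp_pos (-(β * t))).le]

lemma eventually_div_le_of_tendsto_sum_sub (hp : ∀ j, 0 < p j) (hsum : ∑ j, p j = 1)
    (hτ : ∀ j, 0 < τ j) {f : ℝ → ℝ} (hf : ∀ a b, ∃ C, ∀ t ∈ Icc a b, f t ≤ C) {I c : ℝ}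
    (hI : Tendsto (fun t => ∑ j, p j * (f t - f (t - τ j))) atTop (𝓝 I))
    (hc : I / ∑ j, p j * τ j < c) : ∀ᶠ t in atTop, f t / t ≤ c := by
  obtain ⟨c', hIc', hc'c⟩ := exists_between hc
  rw [div_lt_iff₀ (sum_mul_pos hp hsum hτ)] at hIc'
  obtain ⟨δ, M, hδ, -, hM⟩ := exists_pos_forall_mem_Icc hτ
  obtain ⟨a, ha⟩ := eventually_atTop.1 (hI.eventually_le_const hIc')
  obtain ⟨C, hC⟩ := hf (a - M) a
  obtain ⟨C', hC'⟩ := (isCompact_Icc (a := a - M) (b := a)).bddAbove_image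
    (f := fun t => -(c' * t)) (by fun_prop)
  have linear_bound : ∀ t, a - M ≤ t → f t - c' * t - (C + C') ≤ 0 := by
    refine fun t => nonpos_of_le_sum_shift (u := fun t => f t - c' * t - (C + C'))
      (fun j => (hp j).le) hδ hM (fun t hat => ?_) (fun t ht => ?_)
    · have expand : ∑ j, p j * (f (t - τ j) - c' * (t - τ j) - (C + C')) =
          f t - c' * t - (C + C') - ∑ j, p j * (f t - f (t - τ j)) + c' * ∑ j, p j * τ j := by
        rw [sum_mul_sub hsum]
        simp only [mul_sub, Finset.sum_sub_distrib, ← Finset.sum_mul, hsum, Finset.mul_sum,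
          mul_left_comm c']
        ring
      linarith [ha t hat.le]
    · linarith [hC t ht, hC' ⟨t, ht, rfl⟩]
  filter_upwards [eventually_ge_atTop (a - M), eventually_gt_atTop 0,
    (tendsto_id.const_mul_atTop (sub_pos.2 hc'c)).eventually_ge_atTop (C + C')] with t hat ht htC
  rw [div_le_iff₀ ht]
  simp only [id] at htC
  linarith [linear_bound t hat]

lemma tendsto_div_of_tendsto_sum_sub (hp : ∀ j, 0 < p j) (hsum : ∑ j, p j = 1)
    (hτ : ∀ j, 0 < τ j) {f : ℝ → ℝ} (hf : ∀ a b, ∃ C, ∀ t ∈ Icc a b, |f t| ≤ C) {I : ℝ}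
    (hI : Tendsto (fun t => ∑ j, p j * (f t - f (t - τ j))) atTop (𝓝 I)) :
    Tendsto (fun t => f t / t) atTop (𝓝 (I / ∑ j, p j * τ j)) := by
  refine tendsto_order.2 ⟨fun c hc => ?_, fun c hc => ?_⟩
  · obtain ⟨c', hcc', hc'⟩ := exists_between hc
    have neg : ∀ᶠ t in atTop, -f t / t ≤ -c' := by
      refine eventually_div_le_of_tendsto_sum_sub hp hsum hτ (f := fun t => -f t) (I := -I)
        (fun a b => (hf a b).imp fun C hC t ht => neg_le.2 (abs_le.1 (hC t ht)).1) ?_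
        (by rwa [neg_div, neg_lt_neg_iff])
      refine hI.neg.congr fun t => ?_
      simp only [← Finset.sum_neg_distrib, ← mul_neg, neg_sub, sub_neg_eq_add, neg_add_eq_sub]
    filter_upwards [neg] with t ht
    rw [neg_div, neg_le_neg_iff] at ht
    exact hcc'.trans_le ht
  · obtain ⟨c', hc', hcc'⟩ := exists_between hc
    filter_upwards [eventually_div_le_of_tendsto_sum_sub hp hsum hτ
      (fun a b => (hf a b).imp fun C hC t ht => (abs_le.1 (hC t ht)).2) hI hc'] with t ht
    exact ht.trans_lt hcc'

lemma tendsto_of_tendsto_sum_mul {X : Type*} {U : Filter X} (hp : ∀ j, 0 < p j)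
    (hsum : ∑ j, p j = 1) {f : ι → X → ℝ} {L : ℝ} (hf : ∀ j, ∀ ε > 0, ∀ᶠ x in U, f j x ≤ L + ε)
    (hlim : Tendsto (fun x => ∑ j, p j * f j x) U (𝓝 L)) (i : ι) : Tendsto (f i) U (𝓝 L) := by
  refine tendsto_order.2 ⟨fun c hc => ?_, fun c hc => ?_⟩
  · have hε : 0 < p i * (L - c) / 2 := by have := hp i; have := sub_pos.2 hc; positivity
    filter_upwards [eventually_all.2 fun j => hf j _ hε,
      hlim.eventually_const_lt (sub_lt_self L hε)] with x hx hxL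
    have deficit : p i * (L + p i * (L - c) / 2 - f i x) ≤
        ∑ j, p j * (L + p i * (L - c) / 2 - f j x) :=
      Finset.single_le_sum (fun j _ => mul_nonneg (hp j).le (sub_nonneg.2 (hx j)))
        (Finset.mem_univ i)
    rw [sum_mul_sub hsum] at deficit
    by_contra! hfc
    nlinarith [mul_le_mul_of_nonneg_left hfc (hp i).le, mul_pos (hp i) hε]
  · filter_upwards [hf i _ (half_pos (sub_pos.2 hc))] with x hx
    linarith

lemma tendsto_comp_sub_of_forall_eventually_le (hp : ∀ j, 0 < p j) (hsum : ∑ j, p j = 1)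
    {f e : ℝ → ℝ} (hf : ∀ t, f t = ∑ j, p j * f (t - τ j) + e t) (he : Tendsto e atTop (𝓝 0))
    {L : ℝ} (hL : ∀ ε > 0, ∀ᶠ t in atTop, f t ≤ L + ε) {U : Filter ℝ} (hU : U ≤ atTop)
    (hUL : Tendsto f U (𝓝 L)) {σ : ℝ} (hσ : σ ∈ AddSubmonoid.closure (range τ)) :
    Tendsto (fun t => f (t - σ)) U (𝓝 L) := by
  have tendsto_sub (σ : ℝ) : Tendsto (fun t : ℝ => t - σ) U atTop :=
    (tendsto_atTop_add_const_right atTop (-σ) tendsto_id).mono_left hU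
  induction hσ using AddSubmonoid.closure_induction_right with
  | zero => simpa using hUL
  | add_right σ _ s hs ih =>
    obtain ⟨j, rfl⟩ := hs
    simp only [← sub_sub]
    refine tendsto_of_tendsto_sum_mul (f := fun j t => f (t - σ - τ j)) hp hsum
      (fun j ε hε => ?_) ?_ j
    · simp only [sub_sub]
      exact (tendsto_sub _).eventually (hL ε hε)
    · have := ih.sub (he.comp (tendsto_sub σ))
      rw [sub_zero] at this
      exact this.congr fun t => by simp only [Function.comp_apply]; linarith [hf (t - σ)]

end WeightedShifts

section AsymptoticDensity

lemma exists_sub_eq_of_mem_addSubgroupClosure {A : Type*} [AddCommGroup A] {s : Set A} {x : A}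
    (hx : x ∈ AddSubgroup.closure s) :
    ∃ a ∈ AddSubmonoid.closure s, ∃ b ∈ AddSubmonoid.closure s, a - b = x := by
  induction hx using AddSubgroup.closure_induction with
  | mem x hx => exact ⟨x, AddSubmonoid.subset_closure hx, 0, zero_mem _, sub_zero x⟩
  | zero => exact ⟨0, zero_mem _, 0, zero_mem _, sub_zero 0⟩
  | add x y _ _ hx hy =>
    obtain ⟨a, ha, b, hb, rfl⟩ := hx
    obtain ⟨a', ha', b', hb', rfl⟩ := hy
    exact ⟨a + a', add_mem ha ha', b + b', add_mem hb hb', add_sub_add_comm a a' b b'⟩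
  | neg x _ hx =>
    obtain ⟨a, ha, b, hb, rfl⟩ := hx
    exact ⟨b, hb, a, ha, (neg_sub a b).symm⟩

lemma floor_div_mul_le_and_lt {y s : ℝ} (hy : 0 < y) (hs : 0 ≤ s) :
    ⌊s / y⌋₊ * y ≤ s ∧ s < ⌊s / y⌋₊ * y + y := by
  rw [← add_one_mul]
  exact ⟨(le_div_iff₀ hy).1 (Nat.floor_le (div_nonneg hs hy.le)),
    (div_lt_iff₀ hy).1 (Nat.lt_floor_add_one _)⟩

/-- The combinations `(n - k) • b + k • a = n • b + k • (a - b)`, `k ≤ n`, advance in steps of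
length `a - b` and overlap from one `n` to the next as soon as `b ≤ n • (a - b)`. -/
lemma exists_mem_Icc_of_mem_of_mem {S : AddSubmonoid ℝ} {a b : ℝ} (ha : a ∈ S) (hb : b ∈ S)
    (hb0 : 0 < b) (hba : b < a) : ∃ s₀, ∀ s ≥ s₀, ∃ σ ∈ S, s ∈ Set.Icc σ (σ + (a - b)) := by
  have hx : 0 < a - b := sub_pos.2 hba
  obtain ⟨N, hN⟩ := exists_nat_ge (b / (a - b))
  rw [div_le_iff₀ hx] at hN
  refine ⟨N * b, fun s hs => ?_⟩
  obtain ⟨hn, hn'⟩ := floor_div_mul_le_and_lt hb0 (le_trans (by positivity) hs)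
  set n := ⌊s / b⌋₊
  obtain ⟨hk, hk'⟩ := floor_div_mul_le_and_lt hx (sub_nonneg.2 hn)
  set k := ⌊(s - n * b) / (a - b)⌋₊
  have hNn : N < n + 1 := by
    have : (N : ℝ) * b < (n + 1 : ℕ) * b := by push_cast; linarith
    exact_mod_cast lt_of_mul_lt_mul_right this hb0.le
  have hkN : k < N := by
    have : (k : ℝ) * (a - b) < N * (a - b) := by linarith
    exact_mod_cast lt_of_mul_lt_mul_right this hx.le
  refine ⟨(n - k : ℕ) • b + k • a, add_mem (nsmul_mem hb _) (nsmul_mem ha _), ?_⟩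
  have hσ : (n - k : ℕ) • b + k • a = n * b + k * (a - b) := by
    rw [nsmul_eq_mul, nsmul_eq_mul, Nat.cast_sub (by omega)]
    ring
  rw [hσ]
  exact ⟨by linarith, by linarith⟩

lemma exists_mem_addSubmonoidClosure_of_dense {s : Set ℝ} (hs : ∀ x ∈ s, 0 ≤ x)
    (hdense : Dense (AddSubgroup.closure s : Set ℝ)) {η : ℝ} (hη : 0 < η) :
    ∃ t₀, ∀ t ≥ t₀, ∃ σ ∈ AddSubmonoid.closure s, t ∈ Set.Icc σ (σ + η) := by
  obtain ⟨x, hx, hx0, hxη⟩ := hdense.exists_mem_open isOpen_Ioo (Set.nonempty_Ioo.2 hη)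
  obtain ⟨a, ha, b, hb, rfl⟩ := exists_sub_eq_of_mem_addSubgroupClosure hx
  have hb0 : 0 ≤ b := (AddSubmonoid.closure_le (S := AddSubmonoid.nonneg ℝ)).2 hs hb
  obtain ⟨t₀, ht₀⟩ := exists_mem_Icc_of_mem_of_mem (add_mem ha ha) (add_mem hb ha)
    (by linarith) (by linarith)
  rw [add_sub_add_right_eq_sub] at ht₀
  exact ⟨t₀, fun t ht => (ht₀ t ht).imp fun σ ⟨hσ, hσt, htσ⟩ => ⟨hσ, hσt, by linarith⟩⟩

lemma exists_finset_subset_addSubmonoidClosure_of_dense {s : Set ℝ} (hs : ∀ x ∈ s, 0 ≤ x)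
    (hdense : Dense (AddSubgroup.closure s : Set ℝ)) {η : ℝ} (hη : 0 < η) :
    ∃ t₀, ∀ M, ∃ N : Finset ℝ, (∀ σ ∈ N, σ ∈ AddSubmonoid.closure s) ∧ ∀ t ∈ Set.Icc t₀ M,
      (∃ σ ∈ N, σ ∈ Set.Icc (t - η) t) ∧ ∃ σ ∈ N, σ ∈ Set.Icc t (t + η) := by
  obtain ⟨t₀, ht₀⟩ := exists_mem_addSubmonoidClosure_of_dense hs hdense (half_pos hη)
  choose! σ hσ hσt using ht₀
  obtain ⟨n, hn⟩ : ∃ n : ℕ → ℝ, n = fun i : ℕ => t₀ + i * (η / 2) := ⟨_, rfl⟩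
  have hle i : t₀ ≤ n i := by rw [hn]; exact le_add_of_nonneg_right (by positivity)
  refine ⟨t₀, fun M => ⟨(Finset.range (⌊(M - t₀) / (η / 2)⌋₊ + 3)).image (σ ∘ n), ?_, ?_⟩⟩
  · simp only [Finset.mem_image, Function.comp_apply]
    rintro _ ⟨i, _, rfl⟩
    exact hσ _ (hle i)
  rintro t ⟨htt₀, htM⟩
  have division := floor_div_mul_le_and_lt (half_pos hη) (sub_nonneg.2 htt₀)
  set i := ⌊(t - t₀) / (η / 2)⌋₊
  have hi : n i ≤ t ∧ t < n (i + 1) := by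
    rw [hn]
    push_cast
    exact ⟨by linarith [division.1], by linarith [division.2]⟩
  have hiM : i ≤ ⌊(M - t₀) / (η / 2)⌋₊ := Nat.floor_mono (by gcongr)
  have hstep : n (i + 1) = n i + η / 2 ∧ n (i + 2) = n i + η := by
    rw [hn]
    push_cast
    exact ⟨by ring, by ring⟩
  obtain ⟨hσi, hiσ⟩ := hσt _ (hle i)
  obtain ⟨hσi', hiσ'⟩ := hσt _ (hle (i + 2))
  exact ⟨⟨σ (n i), Finset.mem_image.2 ⟨i, Finset.mem_range.2 (by omega), rfl⟩,
      by linarith, by linarith⟩,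
    ⟨σ (n (i + 2)), Finset.mem_image.2 ⟨i + 2, Finset.mem_range.2 (by omega), rfl⟩,
      by linarith, by linarith⟩⟩

lemma exists_pos_exp_mul_lt (L : ℝ) {ε : ℝ} (hε : 0 < ε) :
    ∃ κ > 0, Real.exp κ * (L + ε / 2) < L + ε ∧ L - ε < Real.exp (-κ) * (L - ε / 2) := by
  have upper : Tendsto (fun κ => Real.exp κ * (L + ε / 2)) (nhds 0) (nhds (L + ε / 2)) := by
    simpa using (Continuous.tendsto (by fun_prop) 0 : Tendsto
      (fun κ => Real.exp κ * (L + ε / 2)) (nhds 0) (nhds (Real.exp 0 * (L + ε / 2))))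
  have lower : Tendsto (fun κ => Real.exp (-κ) * (L - ε / 2)) (nhds 0) (nhds (L - ε / 2)) := by
    simpa using (Continuous.tendsto (by fun_prop) 0 : Tendsto
      (fun κ => Real.exp (-κ) * (L - ε / 2)) (nhds 0) (nhds (Real.exp (-0) * (L - ε / 2))))
  have := (upper.eventually_lt_const (by linarith : _ < L + ε)).and
    (lower.eventually_const_lt (by linarith : L - ε < _))
  obtain ⟨κ, hκ, hκ0⟩ := ((this.filter_mono nhdsWithin_le_nhds).and
    (self_mem_nhdsWithin (s := Set.Ioi (0 : ℝ)))).exists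
  exact ⟨κ, hκ0, hκ⟩

end AsymptoticDensity

lemma setIntegral_Iic_comp_sub (Z : ℝ → ℝ) (σ t : ℝ) :
    ∫ s in Set.Iic t, Z (s - σ) = ∫ s in Set.Iic (t - σ), Z s := by
  have := (measurePreserving_sub_right volume σ).setIntegral_preimage_emb
    (Homeomorph.subRight σ).measurableEmbedding Z (Set.Iic (t - σ))
  rwa [Set.preimage_sub_const_Iic, sub_add_cancel] at this

/-- The renewal equation `Z = ∑ⱼ pⱼ Z(· - τⱼ) + z` with positive weights of total mass `1` and
positive delays, for a nonnegative `Z` that grows at most like `e^{αt}` at every scale (`antitone`)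
and globally (`growth`, which makes `Z` integrable at `-∞`), with inhomogeneity `z` exponentially
small at `+∞`. -/
structure RenewalEquation {ι : Type*} [Fintype ι] (p τ : ι → ℝ) (Z z : ℝ → ℝ) (α : ℝ) :
    Prop where
  weight_pos : ∀ j, 0 < p j
  weight_sum : ∑ j, p j = 1
  delay_pos : ∀ j, 0 < τ j
  rate_pos : 0 < α
  nonneg : ∀ t, 0 ≤ Z t
  equation : ∀ t, Z t = ∑ j, p j * Z (t - τ j) + z t
  antitone : Antitone fun t => Real.exp (-(α * t)) * Z t
  growth : ∃ A, ∀ t, Z t ≤ A * Real.exp (α * t)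
  decay : ∃ β > 0, ∃ K, ∀ t, |z t| ≤ K * Real.exp (-(β * t))

namespace RenewalEquation

open Set Real Topology

variable {ι : Type*} [Fintype ι] {p τ : ι → ℝ} {Z z : ℝ → ℝ} {α : ℝ}

lemma source_eq (h : RenewalEquation p τ Z z α) :
    z = fun t => Z t - ∑ j, p j * Z (t - τ j) := by
  ext t
  rw [h.equation t, add_sub_cancel_left]

lemma measurable (h : RenewalEquation p τ Z z α) : Measurable Z := by
  have : Z = fun t => exp (α * t) * (exp (-(α * t)) * Z t) := by
    ext t
    rw [← mul_assoc, ← exp_add, add_neg_cancel, exp_zero, one_mul]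
  rw [this]
  exact Measurable.mul (by fun_prop) h.antitone.measurable

lemma mean_delay_pos (h : RenewalEquation p τ Z z α) : 0 < ∑ j, p j * τ j :=
  sum_mul_pos h.weight_pos h.weight_sum h.delay_pos

lemma le_exp_mul (h : RenewalEquation p τ Z z α) {s t : ℝ} (hst : s ≤ t) :
    Z t ≤ exp (α * (t - s)) * Z s := by
  have := mul_le_mul_of_nonneg_left (h.antitone hst) (exp_pos (α * t)).le
  rwa [← mul_assoc, ← mul_assoc, ← exp_add, ← exp_add, add_neg_cancel, exp_zero, one_mul,
    ← sub_eq_add_neg, ← mul_sub] at this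

lemma source_tendsto_zero (h : RenewalEquation p τ Z z α) : Tendsto z atTop (𝓝 0) := by
  obtain ⟨β, hβ, K, hK⟩ := h.decay
  refine squeeze_zero_norm hK ?_
  simpa using (tendsto_exp_neg_atTop_nhds_zero.comp (tendsto_id.const_mul_atTop hβ)).const_mul K

lemma bounded (h : RenewalEquation p τ Z z α) : ∃ B, ∀ t, Z t ≤ B := by
  obtain ⟨A, hA⟩ := h.growth
  obtain ⟨β, hβ, K, hK⟩ := h.decay
  have hA0 : 0 ≤ A := by simpa using (h.nonneg 0).trans (hA 0)
  have hK0 : 0 ≤ K := by simpa using (abs_nonneg _).trans (hK 0)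
  refine exists_forall_le_of_le_sum_shift_add (A := A) h.weight_pos h.weight_sum h.delay_pos hβ
    hK0 (fun t ht => (hA t).trans (mul_le_of_le_one_right hA0 ?_)) (fun t _ => ?_)
  · exact exp_le_one_iff.2 (mul_nonpos_of_nonneg_of_nonpos h.rate_pos.le ht)
  · linarith [h.equation t, (abs_le.1 (hK t)).2]

lemma integrableOn_Iic (h : RenewalEquation p τ Z z α) (t : ℝ) : IntegrableOn Z (Iic t) := by
  obtain ⟨A, hA⟩ := h.growth
  refine ((integrableOn_exp_mul_Iic h.rate_pos t).const_mul A).mono'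
    h.measurable.aestronglyMeasurable (Eventually.of_forall fun s => ?_)
  rw [norm_eq_abs, abs_of_nonneg (h.nonneg s)]
  exact hA s

lemma intervalIntegrable (h : RenewalEquation p τ Z z α) (a b : ℝ) :
    IntervalIntegrable Z volume a b :=
  intervalIntegrable_iff.2 ((h.integrableOn_Iic (max a b)).mono_set fun _ hx => hx.2)

lemma integrableOn_Iic_comp_sub (h : RenewalEquation p τ Z z α) (σ t : ℝ) :
    IntegrableOn (fun s => Z (s - σ)) (Iic t) := by
  have := (measurePreserving_sub_right volume σ).integrableOn_comp_preimage
    (Homeomorph.subRight σ).measurableEmbedding (f := Z) (s := Iic (t - σ))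
  rw [preimage_sub_const_Iic, sub_add_cancel] at this
  exact this.2 (h.integrableOn_Iic _)

lemma integrable_source (h : RenewalEquation p τ Z z α) : Integrable z := by
  have hz : Measurable z := by
    rw [h.source_eq]
    have := h.measurable
    fun_prop
  rw [← integrableOn_univ, ← Iic_union_Ioi (a := (0 : ℝ)), integrableOn_union]
  constructor
  · rw [h.source_eq]
    exact (h.integrableOn_Iic 0).sub (integrable_finsetSum _ fun j _ =>
      (h.integrableOn_Iic_comp_sub (τ j) 0).const_mul _)
  · obtain ⟨β, hβ, K, hK⟩ := h.decay
    refine ((integrableOn_exp_mul_Ioi (neg_lt_zero.2 hβ) 0).const_mul K).mono'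
      hz.aestronglyMeasurable (Eventually.of_forall fun t => ?_)
    rw [neg_mul]
    exact hK t

lemma sum_mul_integral_Iic_sub (h : RenewalEquation p τ Z z α) (t : ℝ) :
    ∑ j, p j * ((∫ s in Iic t, Z s) - ∫ s in Iic (t - τ j), Z s) = ∫ s in Iic t, z s := by
  have hint j : Integrable (fun s => p j * Z (s - τ j)) (volume.restrict (Iic t)) :=
    (h.integrableOn_Iic_comp_sub (τ j) t).const_mul _
  rw [h.source_eq, integral_sub (h.integrableOn_Iic t) (integrable_finsetSum _ fun j _ => hint j),
    integral_finsetSum _ fun j _ => hint j, sum_mul_sub h.weight_sum]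
  simp only [integral_const_mul, setIntegral_Iic_comp_sub]

lemma tendsto_sum_mul_integral_Iic_sub (h : RenewalEquation p τ Z z α) :
    Tendsto (fun t => ∑ j, p j * ((∫ s in Iic t, Z s) - ∫ s in Iic (t - τ j), Z s)) atTop
      (𝓝 (∫ s, z s)) := by
  simp only [h.sum_mul_integral_Iic_sub]
  simpa using (aecover_Iic (μ := volume) tendsto_id).integral_tendsto_of_countably_generated
    h.integrable_source

/-- The elementary renewal theorem, applied to the primitive of `Z`. -/
theorem tendsto_average (h : RenewalEquation p τ Z z α) :
    Tendsto (fun T => 1 / T * ∫ t in (0 : ℝ)..T, Z t) atTop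
      (𝓝 ((∫ t, z t) / ∑ j, p j * τ j)) := by
  have bound (a b : ℝ) : ∃ C, ∀ t ∈ Icc a b, |∫ s in Iic t, Z s| ≤ C := by
    refine ⟨∫ s in Iic b, Z s, fun t ht => ?_⟩
    rw [abs_of_nonneg (integral_nonneg h.nonneg)]
    exact setIntegral_mono_set (h.integrableOn_Iic b) (Eventually.of_forall h.nonneg)
      (Iic_subset_Iic.2 ht.2).eventuallyLE
  have := (tendsto_div_of_tendsto_sum_sub h.weight_pos h.weight_sum h.delay_pos bound
    h.tendsto_sum_mul_integral_Iic_sub).sub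
      (tendsto_const_nhds (x := ∫ s in Iic (0 : ℝ), Z s) |>.div_atTop tendsto_id)
  rw [sub_zero] at this
  refine this.congr fun T => ?_
  rw [id, ← sub_div, intervalIntegral.integral_Iic_sub_Iic (h.integrableOn_Iic 0)
    (h.integrableOn_Iic T), div_eq_inv_mul, one_div]

lemma eventually_abs_sub_le_of_tendsto_comp_sub (h : RenewalEquation p τ Z z α) {U : Filter ℝ}
    {L : ℝ} (hdense : Dense (AddSubgroup.closure (range τ) : Set ℝ))
    (hL : ∀ σ ∈ AddSubmonoid.closure (range τ), Tendsto (fun t => Z (t - σ)) U (𝓝 L))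
    {ε : ℝ} (hε : 0 < ε) : ∃ S, ∀ M, ∀ᶠ t in U, ∀ s ∈ Icc (t - S - M) (t - S), |Z s - L| ≤ ε := by
  obtain ⟨κ, hκ, hupper, hlower⟩ := exists_pos_exp_mul_lt L hε
  obtain ⟨S, hS⟩ := exists_finset_subset_addSubmonoidClosure_of_dense
    (by rintro _ ⟨j, rfl⟩; exact (h.delay_pos j).le) hdense (div_pos hκ h.rate_pos)
  refine ⟨S, fun M => ?_⟩
  obtain ⟨N, hNmem, hN⟩ := hS (S + M)
  have near : ∀ᶠ t in U, ∀ σ ∈ N, |Z (t - σ) - L| ≤ ε / 2 :=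
    (Finset.eventually_all _).2 fun σ hσ => (tendsto_iff_norm_sub_tendsto_zero.1
      (hL σ (hNmem σ hσ))).eventually_le_const (half_pos hε)
  filter_upwards [near] with t ht s hs
  obtain ⟨⟨σ, hσ, hσs⟩, ⟨ρ, hρ, hρs⟩⟩ := hN (t - s) ⟨by linarith [hs.2], by linarith [hs.1]⟩
  have hκα : α * (κ / α) = κ := mul_div_cancel₀ κ h.rate_pos.ne'
  have Z_le : Z s ≤ exp κ * Z (t - ρ) := (h.le_exp_mul (by linarith [hρs.1])).trans
    (mul_le_mul_of_nonneg_right (exp_le_exp.2 (by nlinarith [hρs.2, h.rate_pos])) (h.nonneg _))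
  have le_Z : exp (-κ) * Z (t - σ) ≤ Z s := by
    rw [exp_neg, inv_mul_le_iff₀ (exp_pos κ)]
    exact (h.le_exp_mul (by linarith [hσs.2])).trans (mul_le_mul_of_nonneg_right
      (exp_le_exp.2 (by nlinarith [hσs.1, h.rate_pos])) (h.nonneg _))
  have := mul_le_mul_of_nonneg_left (by linarith [abs_le.1 (ht ρ hρ)] : Z (t - ρ) ≤ L + ε / 2)
    (exp_pos κ).le
  have := mul_le_mul_of_nonneg_left (by linarith [abs_le.1 (ht σ hσ)] : L - ε / 2 ≤ Z (t - σ))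
    (exp_pos (-κ)).le
  exact abs_le.2 ⟨by linarith, by linarith⟩

lemma abs_integral_Iic_sub_sub_le (h : RenewalEquation p τ Z z α) {a b L ε : ℝ} (hab : a ≤ b)
    (hZ : ∀ s ∈ Icc a b, |Z s - L| ≤ ε) :
    |((∫ s in Iic b, Z s) - ∫ s in Iic a, Z s) - L * (b - a)| ≤ ε * (b - a) := by
  have : ((∫ s in Iic b, Z s) - ∫ s in Iic a, Z s) - L * (b - a) = ∫ s in a..b, (Z s - L) := by
    rw [intervalIntegral.integral_Iic_sub_Iic (h.integrableOn_Iic a) (h.integrableOn_Iic b),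
      intervalIntegral.integral_sub (h.intervalIntegrable a b) intervalIntegrable_const,
      intervalIntegral.integral_const, smul_eq_mul, mul_comm L]
  rw [this]
  have := intervalIntegral.norm_integral_le_of_norm_le_const (f := fun s => Z s - L) (C := ε)
    (a := a) (b := b) fun s hs => hZ s (by rw [uIoc_of_le hab] at hs; exact Ioc_subset_Icc_self hs)
  rwa [abs_of_nonneg (sub_nonneg.2 hab)] at this

/-- Near the points `t - S`, `t` far along `U`, the solution is almost equal to `L` on windows
longer than all delays, where the conservation law `tendsto_sum_mul_integral_Iic_sub` reads off
the value of `L`. -/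
lemma mul_mean_delay_eq_of_tendsto_comp_sub (h : RenewalEquation p τ Z z α) {U : Filter ℝ}
    [U.NeBot] (hU : U ≤ atTop) {L : ℝ} (hdense : Dense (AddSubgroup.closure (range τ) : Set ℝ))
    (hL : ∀ σ ∈ AddSubmonoid.closure (range τ), Tendsto (fun t => Z (t - σ)) U (𝓝 L)) :
    L * ∑ j, p j * τ j = ∫ t, z t := by
  obtain ⟨δ, M, -, -, hM⟩ := exists_pos_forall_mem_Icc h.delay_pos
  have close {ε : ℝ} (hε : 0 < ε) : |(∫ t, z t) - L * ∑ j, p j * τ j| ≤ ε * ∑ j, p j * τ j := by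
    obtain ⟨S, hS⟩ := h.eventually_abs_sub_le_of_tendsto_comp_sub hdense hL hε
    have conservation := (h.tendsto_sum_mul_integral_Iic_sub.comp
      ((tendsto_atTop_add_const_right atTop (-S) tendsto_id).mono_left hU)).sub_const
        (L * ∑ j, p j * τ j)
    refine le_of_tendsto conservation.abs ((hS M).mono fun t ht => ?_)
    simp only [Function.comp_apply, id, ← sub_eq_add_neg]
    rw [Finset.mul_sum, Finset.mul_sum, ← Finset.sum_sub_distrib]
    refine (Finset.abs_sum_le_sum_abs _ _).trans (Finset.sum_le_sum fun j _ => ?_)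
    have := h.abs_integral_Iic_sub_sub_le (sub_le_self (t - S) (h.delay_pos j).le) fun s hs =>
      ht s ⟨by linarith [hs.1, (hM j).2], hs.2⟩
    rw [sub_sub_cancel] at this
    rw [mul_left_comm L, ← mul_sub, abs_mul, abs_of_pos (h.weight_pos j), mul_left_comm ε]
    exact mul_le_mul_of_nonneg_left this (h.weight_pos j).le
  refine eq_of_forall_dist_le fun ε hε => ?_
  have := close (div_pos hε h.mean_delay_pos)
  rwa [div_mul_cancel₀ _ h.mean_delay_pos.ne', ← Real.dist_eq, dist_comm] at this

lemma tendsto_of_dense (h : RenewalEquation p τ Z z α)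
    (hdense : Dense (AddSubgroup.closure (range τ) : Set ℝ)) :
    Tendsto Z atTop (𝓝 ((∫ t, z t) / ∑ j, p j * τ j)) := by
  obtain ⟨B, hB⟩ := h.bounded
  have above : IsBoundedUnder (· ≤ ·) atTop Z := ⟨B, eventually_map.2 (Eventually.of_forall hB)⟩
  have below : IsBoundedUnder (· ≥ ·) atTop Z :=
    ⟨0, eventually_map.2 (Eventually.of_forall h.nonneg)⟩
  have limit_eq {L : ℝ} (hL : MapClusterPt L atTop Z) (hext : (∀ ε > 0, ∀ᶠ t in atTop, Z t ≤ L + ε)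
      ∨ ∀ ε > 0, ∀ᶠ t in atTop, L - ε ≤ Z t) : L = (∫ t, z t) / ∑ j, p j * τ j := by
    obtain ⟨U, hU, hUL⟩ := mapClusterPt_iff_ultrafilter.1 hL
    refine eq_div_of_mul_eq h.mean_delay_pos.ne'
      (h.mul_mean_delay_eq_of_tendsto_comp_sub hU hdense fun σ hσ => ?_)
    rcases hext with hle | hge
    · exact tendsto_comp_sub_of_forall_eventually_le h.weight_pos h.weight_sum h.equation
        h.source_tendsto_zero hle hU hUL hσ
    · have := tendsto_comp_sub_of_forall_eventually_le (f := fun t => -Z t) (e := fun t => -z t)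
        h.weight_pos h.weight_sum (fun t => ?_) (neg_zero (G := ℝ) ▸ h.source_tendsto_zero.neg)
        (fun ε hε => (hge ε hε).mono fun t ht => ?_) hU hUL.neg hσ
      · simpa using this.neg
      · simp only [mul_neg, Finset.sum_neg_distrib]
        linarith [h.equation t]
      · linarith
  refine tendsto_of_liminf_eq_limsup (limit_eq (.liminf above.isCoboundedUnder_ge below)
    (.inr fun ε hε => ?_)) (limit_eq (.limsup below.isCoboundedUnder_le above)
    (.inl fun ε hε => ?_)) above below
  · exact (eventually_lt_of_lt_liminf (sub_lt_self _ hε) below).mono fun t ht => ht.le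
  · exact (eventually_lt_of_limsup_lt (lt_add_of_pos_right _ hε) above).mono fun t ht => ht.le

lemma tendsto_zero_atBot (h : RenewalEquation p τ Z z α) : Tendsto Z atBot (𝓝 0) := by
  obtain ⟨A, hA⟩ := h.growth
  refine squeeze_zero h.nonneg hA ?_
  simpa using (tendsto_exp_atBot.comp (tendsto_id.const_mul_atBot h.rate_pos)).const_mul A

lemma sum_range_source_eq (h : RenewalEquation p τ Z z α) {a : ℝ} {n : ι → ℕ}
    (hn : ∀ j, τ j = n j * a) (t : ℝ) (N : ℕ) :
    ∑ k ∈ Finset.range N, (z (t + (k : ℤ) * a) + z (t + (-(k + 1 : ℤ) : ℤ) * a)) =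
      ∑ j, p j * ∑ i ∈ Finset.range (n j), Z (t + N * a - (i + 1) * a) -
        ∑ j, p j * ∑ i ∈ Finset.range (n j), Z (t - N * a - (i + 1) * a) := by
  set Y : ℝ → ℝ := fun x => ∑ j, p j * ∑ i ∈ Finset.range (n j), Z (x - (i + 1) * a) with hY
  have increment (x : ℝ) : Y (x + a) - Y x = z x := by
    have telescope j : ∑ i ∈ Finset.range (n j), (Z (x + a - (i + 1) * a) - Z (x - (i + 1) * a)) =
        Z x - Z (x - τ j) := by
      have := Finset.sum_range_sub' (fun i : ℕ => Z (x - i * a)) (n j)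
      rw [Nat.cast_zero, zero_mul, sub_zero, ← hn] at this
      rw [← this]
      exact Finset.sum_congr rfl fun i _ => by push_cast; ring_nf
    simp only [hY, ← Finset.sum_sub_distrib, ← mul_sub, telescope]
    rw [sum_mul_sub h.weight_sum, h.source_eq]
  change _ = Y (t + N * a) - Y (t - N * a)
  induction N with
  | zero => simp
  | succ N ih =>
    rw [Finset.sum_range_succ, ih, ← increment, ← increment]
    push_cast
    ring_nf

lemma mul_eq_of_hasSum_of_tendsto (h : RenewalEquation p τ Z z α) {a : ℝ} (ha : 0 < a)
    {n : ι → ℕ} (hn : ∀ j, τ j = n j * a) {M : ℝ} (hM : Tendsto Z atTop (𝓝 M)) {t S : ℝ}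
    (hS : HasSum (fun k : ℤ => z (t + k * a)) S) : S * a = M * ∑ j, p j * τ j := by
  have limit {l : Filter ℝ} {L : ℝ} (hL : Tendsto Z l (𝓝 L)) {x : ℕ → ℝ}
      (hx : ∀ b, Tendsto (fun N => x N - b) atTop l) :
      Tendsto (fun N => ∑ j, p j * ∑ i ∈ Finset.range (n j), Z (x N - (i + 1) * a)) atTop
        (𝓝 (∑ j, p j * ∑ _i ∈ Finset.range (n j), L)) :=
    tendsto_finsetSum _ fun j _ => (tendsto_finsetSum _ fun i _ => hL.comp (hx _)).const_mul _
  have hNa : Tendsto (fun N : ℕ => (N : ℝ) * a) atTop atTop :=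
    tendsto_natCast_atTop_atTop.atTop_mul_const ha
  have partial_sums := (limit hM (x := fun N => t + N * a) fun b =>
      (tendsto_atTop_add_const_left atTop (t - b) hNa).congr fun N => by ring).sub
    (limit h.tendsto_zero_atBot (x := fun N => t - N * a) fun b =>
      (tendsto_atBot_add_const_left atTop (t - b) (tendsto_neg_atTop_atBot.comp hNa)).congr
        fun N => by simp only [Function.comp_apply]; ring)
  rw [tendsto_nhds_unique hS.nat_add_neg_add_one.tendsto_sum_nat
    (partial_sums.congr fun N => (h.sum_range_source_eq hn t N).symm)]
  simp only [Finset.sum_const, Finset.card_range, nsmul_eq_mul, mul_zero, sub_zero, hn,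
    Finset.sum_mul, Finset.mul_sum]
  exact Finset.sum_congr rfl fun j _ => by ring

end RenewalEquation

section ExponentialSums

open Real Topology

/-- Exponentials with different rates are linearly independent on every nonempty open set: the
operator `d/dt - λⱼ` removes one summand after another. -/
lemma eq_zero_of_sum_exp_eq {ι : Type*} {s : Finset ι} {c rate : ι → ℝ} {C μ : ℝ} {U : Set ℝ}
    (hU : IsOpen U) (hne : U.Nonempty) (hrate : ∀ i ∈ s, rate i ≠ μ)
    (h : ∀ t ∈ U, ∑ i ∈ s, c i * exp (rate i * t) = C * exp (μ * t)) : C = 0 := by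
  classical
  induction s using Finset.induction_on generalizing c C with
  | empty =>
    obtain ⟨t, ht⟩ := hne
    simpa using (h t ht).symm
  | insert j s hj ih =>
    have hexp (c r t : ℝ) : HasDerivAt (fun t => c * exp (r * t)) (c * (exp (r * t) * r)) t := by
      simpa using (((hasDerivAt_id t).const_mul r).exp).const_mul c
    have reduced : C * (μ - rate j) = 0 := by
      refine ih (c := fun i => c i * (rate i - rate j))
        (fun i hi => hrate i (Finset.mem_insert_of_mem hi)) fun t ht => ?_
      have deriv_eq : ∑ i ∈ insert j s, c i * (exp (rate i * t) * rate i) =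
          C * (exp (μ * t) * μ) :=
        (HasDerivAt.fun_sum fun i _ => hexp (c i) (rate i) t).unique
          ((hexp C μ t).congr_of_eventuallyEq (Filter.mem_of_superset (hU.mem_nhds ht) h))
      calc ∑ i ∈ s, c i * (rate i - rate j) * exp (rate i * t)
          = ∑ i ∈ insert j s, c i * (rate i - rate j) * exp (rate i * t) := by
            rw [Finset.sum_insert hj, sub_self, mul_zero, zero_mul, zero_add]
        _ = ∑ i ∈ insert j s, c i * (exp (rate i * t) * rate i) -
              rate j * ∑ i ∈ insert j s, c i * exp (rate i * t) := by
            rw [Finset.mul_sum, ← Finset.sum_sub_distrib]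
            exact Finset.sum_congr rfl fun i _ => by ring
        _ = C * (μ - rate j) * exp (μ * t) := by
            rw [deriv_eq, h t ht]
            ring
    exact (mul_eq_zero.1 reduced).resolve_right
      (sub_ne_zero.2 (hrate j (Finset.mem_insert_self j s)).symm)

lemma summable_int_exp_mul_of_neg {x : ℝ} (hx : x < 0) (K : ℤ) :
    Summable fun k : ℤ => if K ≤ k then exp (x * k) else 0 := by
  have inj : Function.Injective fun n : ℕ => K + (n : ℤ) := fun m n hmn => by simpa using hmn
  refine (inj.summable_iff fun k hk => if_neg fun hKk => hk ⟨(k - K).toNat, ?_⟩).1 ?_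
  · simp only
    omega
  · refine ((summable_exp_nat_mul_iff.2 hx).mul_left (exp (x * K))).congr fun n => ?_
    rw [Function.comp_apply, if_pos (by omega), ← exp_add]
    push_cast
    ring_nf

lemma summable_int_exp_mul_of_pos {x : ℝ} (hx : 0 < x) (K : ℤ) :
    Summable fun k : ℤ => if K ≤ k then 0 else exp (x * k) := by
  refine ((Equiv.neg ℤ).summable_iff).1
    ((summable_int_exp_mul_of_neg (neg_neg_of_pos hx) (1 - K)).congr fun k => ?_)
  simp only [Function.comp_apply, Equiv.neg_apply]
  split_ifs
  · omega
  · push_cast; ring_nf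
  · rfl
  · omega

end ExponentialSums

/-- The inner parallel volume `∑_{m<d} κₘ ε^{d-m}` (for `ε < g`), `-κ_d` (for `ε ≥ g`) of a diphase
Steiner-like set, rescaled by `ε^{D-d}` and written in the variable `t = -log ε`; the threshold is
`b = -log g`. -/
noncomputable def diphaseProfile (d : ℕ) (D b : ℝ) (κ : ℕ → ℝ) (t : ℝ) : ℝ :=
  if b < t then ∑ m ∈ Finset.range d, κ m * Real.exp ((m - D) * t)
  else -κ d * Real.exp ((d - D) * t)

namespace diphaseProfile

open Real Set Topology

variable {d : ℕ} {D b : ℝ} {κ : ℕ → ℝ}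

lemma abs_le (d : ℕ) (D b : ℝ) (κ : ℕ → ℝ) (t : ℝ) :
    |diphaseProfile d D b κ t| ≤
      (∑ m ∈ Finset.range (d + 1), |κ m| * exp ((m - d + 1) * b)) * exp (-((D - d + 1) * t)) := by
  have factor (m : ℕ) : exp ((m - D) * t) = exp ((m - d + 1) * t) * exp (-((D - d + 1) * t)) := by
    rw [← exp_add]
    ring_nf
  rw [diphaseProfile, Finset.sum_range_succ]
  split_ifs with ht
  · have low {m : ℕ} (hm : m ∈ Finset.range d) : exp ((m - d + 1) * t) ≤ exp ((m - d + 1) * b) := by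
      have : (m : ℝ) + 1 ≤ d := by exact_mod_cast Finset.mem_range.1 hm
      exact exp_le_exp.2 (mul_le_mul_of_nonpos_left ht.le (by linarith))
    calc |∑ m ∈ Finset.range d, κ m * exp ((m - D) * t)|
        ≤ ∑ m ∈ Finset.range d, |κ m * exp ((m - D) * t)| := Finset.abs_sum_le_sum_abs _ _
      _ ≤ ∑ m ∈ Finset.range d, |κ m| * exp ((m - d + 1) * b) * exp (-((D - d + 1) * t)) := by
        refine Finset.sum_le_sum fun m hm => ?_
        rw [abs_mul, abs_of_pos (exp_pos _), factor, ← mul_assoc]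
        exact mul_le_mul_of_nonneg_right (mul_le_mul_of_nonneg_left (low hm) (abs_nonneg _))
          (exp_pos _).le
      _ ≤ _ := by
        rw [← Finset.sum_mul]
        gcongr
        exact le_add_of_nonneg_right (by positivity)
  · rw [abs_mul, abs_neg, abs_of_pos (exp_pos _), factor, ← mul_assoc]
    gcongr
    refine le_trans ?_ (le_add_of_nonneg_left (Finset.sum_nonneg fun m _ => by positivity))
    rw [sub_self, zero_add, one_mul, one_mul]
    gcongr
    exact not_lt.1 ht

lemma integrable_and_integral_eq (hD : (d : ℝ) - 1 < D) (hDd : D < d) :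
    Integrable (diphaseProfile d D b κ) ∧ ∫ t, diphaseProfile d D b κ t =
      ∑ m ∈ Finset.range (d + 1), exp ((m - D) * b) / (D - m) * κ m := by
  have hmD {m : ℕ} (hm : m ∈ Finset.range d) : (m : ℝ) - D < 0 := by
    have : (m : ℝ) + 1 ≤ d := by exact_mod_cast Finset.mem_range.1 hm
    linarith
  have right {m : ℕ} (hm : m ∈ Finset.range d) :
      IntegrableOn (fun t => κ m * exp ((m - D) * t)) (Ioi b) :=
    (integrableOn_exp_mul_Ioi (hmD hm) b).const_mul _
  have left : IntegrableOn (fun t => -κ d * exp ((d - D) * t)) (Iic b) :=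
    (integrableOn_exp_mul_Iic (sub_pos.2 hDd) b).const_mul _
  have eq_right : EqOn (fun t => ∑ m ∈ Finset.range d, κ m * exp ((m - D) * t))
      (diphaseProfile d D b κ) (Ioi b) := fun t ht => (if_pos ht).symm
  have eq_left : EqOn (fun t => -κ d * exp ((d - D) * t)) (diphaseProfile d D b κ) (Iic b) :=
    fun t ht => (if_neg (not_lt.2 ht)).symm
  have sum_right : IntegrableOn (fun t => ∑ m ∈ Finset.range d, κ m * exp ((m - D) * t)) (Ioi b) :=
    integrable_finsetSum _ fun m hm => right hm
  have int_right := sum_right.congr_fun eq_right measurableSet_Ioi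
  have int_left := left.congr_fun eq_left measurableSet_Iic
  refine ⟨integrableOn_univ.1 (Iic_union_Ioi (a := b) ▸ int_left.union int_right), ?_⟩
  rw [← intervalIntegral.integral_Iic_add_Ioi int_left int_right,
    ← setIntegral_congr_fun measurableSet_Ioi eq_right,
    ← setIntegral_congr_fun measurableSet_Iic eq_left, integral_finsetSum _ fun m hm => right hm,
    integral_const_mul, integral_exp_mul_Iic (sub_pos.2 hDd), Finset.sum_range_succ, add_comm]
  congr 1
  · refine Finset.sum_congr rfl fun m hm => ?_
    rw [integral_const_mul, integral_exp_mul_Ioi (hmD hm), ← neg_sub D, neg_div_neg_eq, mul_comm]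
  · rw [← neg_sub D, div_neg, neg_mul_neg, mul_comm]

lemma exists_forall_hasSum {a : ℝ} (ha : 0 < a) (hD : (d : ℝ) - 1 < D) (hDd : D < d) (b : ℝ)
    (κ : ℕ → ℝ) : ∃ c : ℕ → ℝ, ∀ᶠ t in 𝓝[>] 0,
      HasSum (fun k : ℤ => diphaseProfile d D b κ (t + k * a))
        (∑ m ∈ Finset.range (d + 1), c m * exp ((m - D) * t)) := by
  set K : ℤ := ⌈b / a⌉
  have threshold : ∀ᶠ t in 𝓝[>] (0 : ℝ), ∀ k : ℤ, b < t + k * a ↔ K ≤ k := by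
    have below : ((K : ℝ) - 1) * a < b :=
      (lt_div_iff₀ ha).1 (by linarith [Int.ceil_lt_add_one (b / a)])
    filter_upwards [self_mem_nhdsWithin,
      nhdsWithin_le_nhds (eventually_lt_nhds (sub_pos.2 below))] with t (ht₀ : 0 < t) ht k
    refine ⟨fun hk => ?_, fun hk => ?_⟩
    · by_contra! hkK
      have : (k : ℝ) + 1 ≤ K := by exact_mod_cast hkK
      nlinarith
    · have := (div_le_iff₀ ha).1 (Int.ceil_le.1 hk)
      linarith
  let low (m : ℕ) (k : ℤ) : ℝ := if K ≤ k then exp ((m - D) * a * k) else 0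
  let high (k : ℤ) : ℝ := if K ≤ k then 0 else exp ((d - D) * a * k)
  have low_summable {m : ℕ} (hm : m ∈ Finset.range d) : Summable (low m) := by
    have : (m : ℝ) + 1 ≤ d := by exact_mod_cast Finset.mem_range.1 hm
    exact summable_int_exp_mul_of_neg (mul_neg_of_neg_of_pos (by linarith) ha) K
  have high_summable : Summable high :=
    summable_int_exp_mul_of_pos (mul_pos (sub_pos.2 hDd) ha) K
  refine ⟨fun m => if m < d then κ m * ∑' k, low m k else -κ d * ∑' k, high k, ?_⟩
  filter_upwards [threshold] with t ht
  have expand (k : ℤ) : diphaseProfile d D b κ (t + k * a) =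
      ∑ m ∈ Finset.range d, κ m * low m k * exp ((m - D) * t) +
        -κ d * high k * exp ((d - D) * t) := by
    have split_exp (m : ℕ) : exp ((m - D) * (t + k * a)) =
        exp ((m - D) * a * k) * exp ((m - D) * t) := by
      rw [← exp_add]
      ring_nf
    simp only [diphaseProfile, ht, low, high, split_exp]
    split_ifs <;> simp [mul_assoc]
  simp_rw [expand, Finset.sum_range_succ, if_neg (lt_irrefl d)]
  rw [Finset.sum_congr rfl fun m hm => by rw [if_pos (Finset.mem_range.1 hm)]]
  exact (hasSum_sum fun m hm => ((low_summable hm).hasSum.mul_left (κ m)).mul_right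
    (exp ((m - D) * t))).add ((high_summable.hasSum.mul_left (-κ d)).mul_right _)

lemma eq_zero_of_hasSum_imp_eq {ι : Type*} [Fintype ι] {a C : ℝ} (ha : 0 < a)
    (hD : (d : ℝ) - 1 < D) (hDd : D < d) (b : ι → ℝ) (κ : ι → ℕ → ℝ)
    (h : ∀ t S, HasSum (fun k : ℤ => ∑ q, diphaseProfile d D (b q) (κ q) (t + k * a)) S → S = C) :
    C = 0 := by
  choose c hc using fun q => exists_forall_hasSum ha hD hDd (b q) (κ q)
  obtain ⟨u, hu, hsum⟩ := mem_nhdsGT_iff_exists_Ioo_subset.1 (eventually_all.2 hc)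
  refine eq_zero_of_sum_exp_eq (s := Finset.range (d + 1)) (c := fun m => ∑ q, c q m)
    (rate := fun m => (m : ℝ) - D) (μ := 0) isOpen_Ioo (nonempty_Ioo.2 hu) (fun m _ hmD => ?_)
    fun t ht => ?_
  · have hlow : d < m + 1 := by exact_mod_cast (by linarith : (d : ℝ) < m + 1)
    have hhigh : m < d := by exact_mod_cast (by linarith : (m : ℝ) < d)
    omega
  · rw [← h t _ (hasSum_sum fun q _ => hsum ht q), Finset.sum_comm]
    simp [Finset.sum_mul]

end diphaseProfile

section Geometry

open Set Metric Topology

lemma mem_cthickening_image_iff {X Y : Type*} [PseudoMetricSpace X] [PseudoMetricSpace Y]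
    {φ : X → Y} {r : ℝ} (hr : 0 < r) (hφ : ∀ x y, dist (φ x) (φ y) = r * dist x y)
    {S : Set X} {x : X} {ε : ℝ} :
    φ x ∈ cthickening ε (φ '' S) ↔ x ∈ cthickening (ε / r) S := by
  have scale (y : X) : edist (φ x) (φ y) = ENNReal.ofReal r * edist x y := by
    rw [edist_dist, edist_dist, hφ, ENNReal.ofReal_mul hr.le]
  have infEDist_scale : infEDist (φ x) (φ '' S) = ENNReal.ofReal r * infEDist x S := by
    simp only [infEDist, iInf_image, scale]
    simp only [ENNReal.mul_iInf_of_ne (ENNReal.ofReal_pos.2 hr).ne' ENNReal.ofReal_ne_top]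
  rw [mem_cthickening_iff, mem_cthickening_iff, infEDist_scale, ENNReal.ofReal_div_of_pos hr,
    ENNReal.le_div_iff_mul_le (.inl (ENNReal.ofReal_pos.2 hr).ne') (.inl ENNReal.ofReal_ne_top),
    mul_comm]

section NormedSpace

variable {E : Type*} [NormedAddCommGroup E] [NormedSpace ℝ E]

lemma infEDist_eq_of_frontier_subset [FiniteDimensional ℝ E] {A B B' : Set E} {x : E} (hx : x ∈ A)
    (hA : frontier A ⊆ B) (hBB' : B ⊆ B') (hB' : B' ∩ A ⊆ B) : infEDist x B = infEDist x B' := by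
  refine le_antisymm (le_infEDist.2 fun y hy => ?_) (infEDist_anti hBB')
  by_cases hyA : y ∈ A
  · exact infEDist_le_edist_of_mem (hB' ⟨hy, hyA⟩)
  · obtain ⟨w, hwA, hw⟩ :=
      exists_mem_frontier_infDist_compl_eq_dist hx fun hA => hyA (hA ▸ mem_univ y)
    refine (infEDist_le_edist_of_mem (hA hwA)).trans ?_
    rw [edist_dist, edist_dist, ← hw]
    exact ENNReal.ofReal_le_ofReal (infDist_le_dist_of_mem hyA)

lemma cthickening_subset_image_homothety [ProperSpace E] {C : Set E} (hconv : Convex ℝ C)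
    (hC : IsClosed C) {x₀ : E} {R ε : ℝ} (hR : 0 < R) (hball : closedBall x₀ R ⊆ C) (hε : 0 < ε) :
    cthickening ε C ⊆ AffineMap.homothety x₀ (1 + ε / R) '' C := by
  intro y hy
  rw [hC.cthickening_eq_biUnion_closedBall hε.le] at hy
  obtain ⟨c, hc, hyc⟩ := mem_iUnion₂.1 hy
  have hw : x₀ + (R / ε) • (y - c) ∈ C := hball <| by
    rw [mem_closedBall, dist_self_add_left, norm_smul, Real.norm_of_nonneg (by positivity),
      ← dist_eq_norm, div_mul_eq_mul_div₀, div_le_iff₀ hε]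
    exact mul_le_mul_of_nonneg_left hyc hR.le
  set s := 1 + ε / R with hs
  have hs₀ : 0 < s := by positivity
  refine ⟨(1 / s) • c + (ε / R / s) • (x₀ + (R / ε) • (y - c)),
    hconv hc hw (by positivity) (by positivity) (by rw [← add_div, ← hs, div_self hs₀.ne']), ?_⟩
  rw [AffineMap.homothety_apply, vsub_eq_sub, vadd_eq_add, smul_sub, smul_add, smul_smul, smul_smul,
    mul_one_div_cancel hs₀.ne', mul_div_cancel₀ _ hs₀.ne', one_smul, smul_add, smul_smul,
    div_mul_div_cancel₀ hR.ne', div_self hε.ne', one_smul, hs, add_smul, one_smul]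
  abel

lemma exists_measureReal_cthickening_le [FiniteDimensional ℝ E] [MeasurableSpace E] [BorelSpace E]
    (μ : Measure E) [μ.IsAddHaarMeasure] {C : Set E} (hconv : Convex ℝ C) (hC : IsCompact C)
    (hint : (interior C).Nonempty) :
    ∃ K, ∀ ε ∈ Ioc (0 : ℝ) 1, μ.real (cthickening ε C) ≤ μ.real C + K * ε := by
  have := FiniteDimensional.proper_real E
  obtain ⟨x₀, hx₀⟩ := hint
  obtain ⟨R, hR, hball⟩ := nhds_basis_closedBall.mem_iff.1 (mem_interior_iff_mem_nhds.1 hx₀)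
  set n := Module.finrank ℝ E
  refine ⟨((1 + 1 / R) ^ n - 1) * μ.real C, fun ε ⟨hε₀, hε₁⟩ => ?_⟩
  have image_le : μ.real (cthickening ε C) ≤ (1 + ε / R) ^ n * μ.real C := by
    have image_lt_top : μ (AffineMap.homothety x₀ (1 + ε / R) '' C) ≠ ⊤ := by
      rw [Measure.addHaar_image_homothety]
      exact ENNReal.mul_ne_top ENNReal.ofReal_ne_top hC.measure_ne_top
    refine (measureReal_mono (cthickening_subset_image_homothety hconv hC.isClosed hR hball hε₀)
      image_lt_top).trans_eq ?_
    rw [measureReal_def, Measure.addHaar_image_homothety, ENNReal.toReal_mul,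
      ENNReal.toReal_ofReal (abs_nonneg _), abs_of_pos (by positivity), measureReal_def]
  have pow_le : (1 + ε / R) ^ n ≤ 1 + ε * ((1 + 1 / R) ^ n - 1) := by
    calc (1 + ε / R) ^ n = ((1 - ε) * 1 + ε * (1 + 1 / R)) ^ n := by congr 1; ring
      _ ≤ (1 - ε) * 1 ^ n + ε * (1 + 1 / R) ^ n :=
        (convexOn_pow n).2 (mem_Ici.2 zero_le_one) (mem_Ici.2 (by positivity))
          (sub_nonneg.2 hε₁) hε₀.le (sub_add_cancel 1 ε)
      _ = 1 + ε * ((1 + 1 / R) ^ n - 1) := by ring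
  calc μ.real (cthickening ε C) ≤ (1 + ε / R) ^ n * μ.real C := image_le
    _ ≤ (1 + ε * ((1 + 1 / R) ^ n - 1)) * μ.real C :=
        mul_le_mul_of_nonneg_right pow_le measureReal_nonneg
    _ = μ.real C + ((1 + 1 / R) ^ n - 1) * μ.real C * ε := by ring

end NormedSpace

section Similarity

variable {E : Type*} [NormedAddCommGroup E] [InnerProductSpace ℝ E] [FiniteDimensional ℝ E]
  {φ : E → E} {r : ℝ}

lemma exists_isometryEquiv_smul_eq (hr : 0 < r) (hφ : ∀ x y, dist (φ x) (φ y) = r * dist x y) :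
    ∃ e : E ≃ᵢ E, ∀ x, φ x = r • e x := by
  have isometry : Isometry fun x => r⁻¹ • φ x := Isometry.of_dist_eq fun x y => by
    rw [dist_smul₀, hφ, Real.norm_of_nonneg (inv_nonneg.2 hr.le), inv_mul_cancel_left₀ hr.ne']
  let : Inhabited E := ⟨0⟩
  exact ⟨(isometry.affineIsometryOfStrictConvexSpace.toAffineIsometryEquiv rfl).toIsometryEquiv,
    fun x => (smul_inv_smul₀ hr.ne' (φ x)).symm⟩

lemma exists_homeomorph_eq (hr : 0 < r) (hφ : ∀ x y, dist (φ x) (φ y) = r * dist x y) :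
    ∃ h : E ≃ₜ E, ⇑h = φ := by
  obtain ⟨e, he⟩ := exists_isometryEquiv_smul_eq hr hφ
  exact ⟨e.toHomeomorph.trans (Homeomorph.smulOfNeZero r hr.ne'), funext fun x => (he x).symm⟩

lemma measureReal_image_similarity [MeasurableSpace E] [BorelSpace E] (hr : 0 < r)
    (hφ : ∀ x y, dist (φ x) (φ y) = r * dist x y) (S : Set E) :
    volume.real (φ '' S) = r ^ Module.finrank ℝ E * volume.real S := by
  obtain ⟨e, he⟩ := exists_isometryEquiv_smul_eq hr hφ
  have volume_image : volume (e '' S) = volume S := by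
    rw [← InnerProductSpace.euclideanHausdorffMeasure_eq_volume,
      e.isometry.euclideanHausdorffMeasure_image S]
  rw [funext he, ← image_image (r • ·) e, image_smul, measureReal_def,
    Measure.addHaar_smul_of_nonneg _ hr.le, volume_image, ENNReal.toReal_mul,
    ENNReal.toReal_ofReal (pow_nonneg hr.le _), measureReal_def]

end Similarity

end Geometry

/-- A self-similar set `F = ⋃ⱼ φⱼ(F)` for similitudes `φⱼ` of ratio `rⱼ < 1`, whose convex hull
`C` satisfies the tileset condition and the condition `∂C ⊆ F`, together with a decomposition of
`C \ ⋃ⱼ φⱼ(C)` into disjoint nonempty open generators `G_q`. -/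
structure IsSelfSimilarTiling {d : ℕ} {ι ν : Type*}
    (φ : ι → EuclideanSpace ℝ (Fin d) → EuclideanSpace ℝ (Fin d)) (r : ι → ℝ)
    (F : Set (EuclideanSpace ℝ (Fin d))) (G : ν → Set (EuclideanSpace ℝ (Fin d))) : Prop where
  ratio_pos (j : ι) : 0 < r j
  ratio_lt_one (j : ι) : r j < 1
  dist_map (j : ι) (x y : EuclideanSpace ℝ (Fin d)) : dist (φ j x) (φ j y) = r j * dist x y
  isBounded : Bornology.IsBounded F
  eq_iUnion_image : F = ⋃ j, φ j '' F
  interior_nonempty : (interior (convexHull ℝ F)).Nonempty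
  image_interior_subset (j : ι) : φ j '' interior (convexHull ℝ F) ⊆ interior (convexHull ℝ F)
  disjoint_image_interior : Pairwise fun j k =>
    Disjoint (φ j '' interior (convexHull ℝ F)) (φ k '' interior (convexHull ℝ F))
  frontier_subset : frontier (convexHull ℝ F) ⊆ F
  isOpen_generator (q : ν) : IsOpen (G q)
  generator_nonempty (q : ν) : (G q).Nonempty
  disjoint_generator : Pairwise fun q q' => Disjoint (G q) (G q')
  iUnion_generator : ⋃ q, G q = convexHull ℝ F \ ⋃ j, φ j '' convexHull ℝ F

namespace IsSelfSimilarTiling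

open Set Metric Topology

variable {d : ℕ} {ι ν : Type*} {φ : ι → EuclideanSpace ℝ (Fin d) → EuclideanSpace ℝ (Fin d)}
  {r : ι → ℝ} {F : Set (EuclideanSpace ℝ (Fin d))} {G : ν → Set (EuclideanSpace ℝ (Fin d))}
  {ε : ℝ} {j k : ι} {q : ν}

lemma isClosed_hull (h : IsSelfSimilarTiling φ r F G) : IsClosed (convexHull ℝ F) :=
  frontier_subset_iff_isClosed.1 (h.frontier_subset.trans (subset_convexHull ℝ F))

lemma isCompact_hull (h : IsSelfSimilarTiling φ r F G) : IsCompact (convexHull ℝ F) :=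
  isCompact_of_isClosed_isBounded h.isClosed_hull (isBounded_convexHull.2 h.isBounded)

lemma set_nonempty (h : IsSelfSimilarTiling φ r F G) : F.Nonempty :=
  convexHull_nonempty_iff.1 (h.interior_nonempty.mono interior_subset)

lemma volume_hull_pos (h : IsSelfSimilarTiling φ r F G) : 0 < volume.real (convexHull ℝ F) :=
  ENNReal.toReal_pos (Measure.measure_pos_of_nonempty_interior _ h.interior_nonempty).ne'
    h.isCompact_hull.measure_ne_top

lemma closure_interior_hull (h : IsSelfSimilarTiling φ r F G) :
    closure (interior (convexHull ℝ F)) = convexHull ℝ F := by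
  rw [(convex_convexHull ℝ F).closure_interior_eq_closure_of_nonempty_interior h.interior_nonempty,
    h.isClosed_hull.closure_eq]

lemma image_subset (h : IsSelfSimilarTiling φ r F G) (j : ι) : φ j '' F ⊆ F := by
  conv_rhs => rw [h.eq_iUnion_image]
  exact subset_iUnion (fun j => φ j '' F) j

lemma exists_homeomorph (h : IsSelfSimilarTiling φ r F G) (j : ι) :
    ∃ e : EuclideanSpace ℝ (Fin d) ≃ₜ EuclideanSpace ℝ (Fin d), ⇑e = φ j :=
  exists_homeomorph_eq (h.ratio_pos j) (h.dist_map j)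

lemma volume_image (h : IsSelfSimilarTiling φ r F G) (j : ι) (S : Set (EuclideanSpace ℝ (Fin d))) :
    volume.real (φ j '' S) = r j ^ d * volume.real S := by
  simpa using measureReal_image_similarity (h.ratio_pos j) (h.dist_map j) S

lemma isClosed_image_hull (h : IsSelfSimilarTiling φ r F G) (j : ι) :
    IsClosed (φ j '' convexHull ℝ F) := by
  obtain ⟨e, he⟩ := h.exists_homeomorph j
  exact he ▸ e.isClosed_image.2 h.isClosed_hull

lemma interior_image_hull (h : IsSelfSimilarTiling φ r F G) (j : ι) :
    interior (φ j '' convexHull ℝ F) = φ j '' interior (convexHull ℝ F) := by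
  obtain ⟨e, he⟩ := h.exists_homeomorph j
  rw [← he, e.image_interior]

lemma closure_image_interior_hull (h : IsSelfSimilarTiling φ r F G) (j : ι) :
    closure (φ j '' interior (convexHull ℝ F)) = φ j '' convexHull ℝ F := by
  obtain ⟨e, he⟩ := h.exists_homeomorph j
  rw [← he, ← e.image_closure, h.closure_interior_hull]

lemma frontier_image_hull (h : IsSelfSimilarTiling φ r F G) (j : ι) :
    frontier (φ j '' convexHull ℝ F) = φ j '' frontier (convexHull ℝ F) := by
  obtain ⟨e, he⟩ := h.exists_homeomorph j
  rw [← he, e.image_frontier]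

lemma image_hull_subset (h : IsSelfSimilarTiling φ r F G) (j : ι) :
    φ j '' convexHull ℝ F ⊆ convexHull ℝ F := by
  rw [← h.closure_image_interior_hull j]
  exact (closure_mono (h.image_interior_subset j)).trans h.closure_interior_hull.le

lemma frontier_image_hull_subset (h : IsSelfSimilarTiling φ r F G) (j : ι) :
    frontier (φ j '' convexHull ℝ F) ⊆ φ j '' F := by
  rw [h.frontier_image_hull]
  exact image_mono h.frontier_subset

lemma volume_frontier_image_hull (h : IsSelfSimilarTiling φ r F G) (j : ι) :
    volume (frontier (φ j '' convexHull ℝ F)) = 0 := by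
  have null : volume.real (frontier (φ j '' convexHull ℝ F)) = 0 := by
    rw [h.frontier_image_hull, h.volume_image, measureReal_def,
      (convex_convexHull ℝ F).addHaar_frontier volume, ENNReal.toReal_zero, mul_zero]
  refine ((measureReal_eq_zero_iff ?_).1 null)
  exact (measure_mono (h.isClosed_image_hull j).frontier_subset).trans_lt
    ((measure_mono (h.image_hull_subset j)).trans_lt h.isCompact_hull.measure_lt_top) |>.ne

lemma image_hull_inter_subset_frontier (h : IsSelfSimilarTiling φ r F G) (hjk : j ≠ k) :
    φ j '' convexHull ℝ F ∩ φ k '' convexHull ℝ F ⊆ frontier (φ j '' convexHull ℝ F) := by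
  have disjoint : Disjoint (φ j '' interior (convexHull ℝ F)) (φ k '' convexHull ℝ F) := by
    rw [← h.closure_image_interior_hull k]
    exact (h.disjoint_image_interior hjk).closure_right
      (h.interior_image_hull j ▸ isOpen_interior)
  rintro x ⟨hj, hk⟩
  rw [(h.isClosed_image_hull j).frontier_eq, h.interior_image_hull]
  exact ⟨hj, fun hx => disjoint_left.1 disjoint hx hk⟩

lemma inter_image_hull_subset (h : IsSelfSimilarTiling φ r F G) (j : ι) :
    F ∩ φ j '' convexHull ℝ F ⊆ φ j '' F := by
  rintro x ⟨hxF, hxj⟩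
  rw [h.eq_iUnion_image] at hxF
  obtain ⟨k, hk⟩ := mem_iUnion.1 hxF
  rcases eq_or_ne j k with rfl | hjk
  · exact hk
  · exact h.frontier_image_hull_subset j
      (h.image_hull_inter_subset_frontier hjk ⟨hxj, image_mono (subset_convexHull ℝ F) hk⟩)

lemma cthickening_inter_image_hull (h : IsSelfSimilarTiling φ r F G) (j : ι) (ε : ℝ) :
    cthickening ε F ∩ φ j '' convexHull ℝ F =
      φ j '' (cthickening (ε / r j) F ∩ convexHull ℝ F) := by
  have infEDist_eq {x} (hx : x ∈ φ j '' convexHull ℝ F) : infEDist x (φ j '' F) = infEDist x F :=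
    infEDist_eq_of_frontier_subset hx (h.frontier_image_hull_subset j) (h.image_subset j)
      (h.inter_image_hull_subset j)
  have mem_iff {u} (hu : u ∈ convexHull ℝ F) :
      φ j u ∈ cthickening ε F ↔ u ∈ cthickening (ε / r j) F := by
    rw [mem_cthickening_iff, ← infEDist_eq (mem_image_of_mem _ hu), ← mem_cthickening_iff,
      mem_cthickening_image_iff (h.ratio_pos j) (h.dist_map j)]
  ext x
  constructor
  · rintro ⟨hx, u, hu, rfl⟩
    exact ⟨u, ⟨(mem_iff hu).1 hx, hu⟩, rfl⟩
  · rintro ⟨u, ⟨hx, hu⟩, rfl⟩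
    exact ⟨(mem_iff hu).2 hx, mem_image_of_mem _ hu⟩

lemma hull_eq_union (h : IsSelfSimilarTiling φ r F G) :
    convexHull ℝ F = (⋃ j, φ j '' convexHull ℝ F) ∪ ⋃ q, G q := by
  rw [h.iUnion_generator, union_sdiff_cancel (iUnion_subset h.image_hull_subset)]

lemma generator_subset_hull (h : IsSelfSimilarTiling φ r F G) (q : ν) : G q ⊆ convexHull ℝ F :=
  (subset_iUnion G q).trans (h.iUnion_generator.trans_subset sdiff_subset)

lemma disjoint_generator_image_hull (h : IsSelfSimilarTiling φ r F G) (q : ν) (j : ι) :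
    Disjoint (G q) (φ j '' convexHull ℝ F) :=
  disjoint_left.2 fun _ hx hxj =>
    (h.iUnion_generator.subset (mem_iUnion_of_mem q hx)).2 (mem_iUnion_of_mem j hxj)

lemma disjoint_generator_set (h : IsSelfSimilarTiling φ r F G) (q : ν) : Disjoint (G q) F := by
  rw [h.eq_iUnion_image, disjoint_iUnion_right]
  exact fun j => (h.disjoint_generator_image_hull q j).mono_right
    (image_mono (subset_convexHull ℝ F))

lemma frontier_generator_subset (h : IsSelfSimilarTiling φ r F G) (q : ν) :
    frontier (G q) ⊆ ⋃ j, frontier (φ j '' convexHull ℝ F) := by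
  intro x hx
  rw [(h.isOpen_generator q).frontier_eq] at hx
  have hxC := closure_minimal (h.generator_subset_hull q) h.isClosed_hull hx.1
  rw [h.hull_eq_union] at hxC
  rcases hxC with hxj | hxq
  · obtain ⟨j, hj⟩ := mem_iUnion.1 hxj
    refine mem_iUnion_of_mem j ?_
    rw [(h.isClosed_image_hull j).frontier_eq]
    exact ⟨hj, fun hint => disjoint_left.1 (((h.disjoint_generator_image_hull q j).mono_right
      interior_subset).closure_left isOpen_interior) hx.1 hint⟩
  · obtain ⟨q', hq'⟩ := mem_iUnion.1 hxq
    rcases eq_or_ne q q' with rfl | hqq'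
    · exact absurd hq' hx.2
    · exact absurd hq' (disjoint_left.1
        ((h.disjoint_generator hqq').closure_left (h.isOpen_generator q')) hx.1)

lemma volume_generator_pos (h : IsSelfSimilarTiling φ r F G) (q : ν) : 0 < volume.real (G q) :=
  ENNReal.toReal_pos ((h.isOpen_generator q).measure_pos volume (h.generator_nonempty q)).ne'
    (measure_ne_top_of_subset (h.generator_subset_hull q) h.isCompact_hull.measure_ne_top)

lemma volume_innerNbhd_generator [Countable ι] (h : IsSelfSimilarTiling φ r F G)
    (hε : 0 ≤ ε) (q : ν) :
    volume.real (innerNbhd (G q) ε) = volume.real (cthickening ε F ∩ G q) := by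
  have infDist_eq {x} (hx : x ∈ G q) : infDist x (G q)ᶜ = infDist x F := by
    rw [infDist, infDist, infEDist_eq_of_frontier_subset hx
      ((h.frontier_generator_subset q).trans (iUnion_subset fun j =>
        (h.frontier_image_hull_subset j).trans (h.image_subset j)))
      (h.disjoint_generator_set q).subset_compl_left (by simp)]
  have null : volume (frontier (G q)) = 0 :=
    measure_mono_null (h.frontier_generator_subset q)
      (measure_iUnion_null h.volume_frontier_image_hull)
  have mem_iff {x} (hx : x ∉ frontier (G q)) :
      x ∈ innerNbhd (G q) ε ↔ x ∈ cthickening ε F ∩ G q := by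
    have mem_closure : x ∈ closure (G q) ↔ x ∈ G q := by
      rw [closure_eq_interior_union_frontier, (h.isOpen_generator q).interior_eq, mem_union,
        or_iff_left hx]
    rw [innerNbhd, mem_ofPred_eq, mem_closure, and_comm, mem_inter_iff, mem_cthickening_iff,
      ENNReal.le_ofReal_iff_toReal_le (infEDist_ne_top h.set_nonempty) hε]
    exact and_congr_left fun hxG => by rw [infDist_eq hxG, infDist]
  refine measureReal_congr (eventuallyEq_set.2 ?_)
  filter_upwards [measure_eq_zero_iff_ae_notMem.1 null] with x hx using mem_iff hx

variable [Fintype ι] [Fintype ν]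

lemma volume_inter_hull (h : IsSelfSimilarTiling φ r F G)
    {T : Set (EuclideanSpace ℝ (Fin d))} (hT : MeasurableSet T) :
    volume.real (T ∩ convexHull ℝ F) =
      ∑ j, volume.real (T ∩ φ j '' convexHull ℝ F) + ∑ q, volume.real (T ∩ G q) := by
  let piece : ι ⊕ ν → Set (EuclideanSpace ℝ (Fin d)) := Sum.elim (fun j => φ j '' convexHull ℝ F) G
  have piece_subset : ∀ s, piece s ⊆ convexHull ℝ F :=
    Sum.rec h.image_hull_subset h.generator_subset_hull
  have measurable : ∀ s, MeasurableSet (piece s) :=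
    Sum.rec (fun j => (h.isClosed_image_hull j).measurableSet)
      fun q => (h.isOpen_generator q).measurableSet
  have aedisjoint : Pairwise fun s s' => AEDisjoint volume (piece s) (piece s') := by
    rintro (j | q) (k | q') hne
    · exact measure_mono_null (h.image_hull_inter_subset_frontier (ne_of_apply_ne _ hne))
        (h.volume_frontier_image_hull j)
    · exact (h.disjoint_generator_image_hull q' j).symm.aedisjoint
    · exact (h.disjoint_generator_image_hull q k).aedisjoint
    · exact (h.disjoint_generator (ne_of_apply_ne _ hne)).aedisjoint
  have partition : T ∩ convexHull ℝ F = ⋃ s ∈ Finset.univ, T ∩ piece s := by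
    rw [h.hull_eq_union]
    simp [piece, iUnion_sum, inter_union_distrib_left, inter_iUnion]
  rw [partition, measureReal_biUnion_finset₀
    (fun s _ s' _ hne => (aedisjoint hne).mono inter_subset_right inter_subset_right)
    (fun s _ => (hT.inter (measurable s)).nullMeasurableSet)
    (fun s _ => measure_ne_top_of_subset (inter_subset_right.trans (piece_subset s))
      h.isCompact_hull.measure_ne_top), Fintype.sum_sum_type]
  rfl

lemma volume_cthickening_inter_hull (h : IsSelfSimilarTiling φ r F G) (hε : 0 ≤ ε) :
    volume.real (cthickening ε F ∩ convexHull ℝ F) =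
      ∑ j, r j ^ d * volume.real (cthickening (ε / r j) F ∩ convexHull ℝ F) +
        ∑ q, volume.real (innerNbhd (G q) ε) := by
  rw [h.volume_inter_hull isClosed_cthickening.measurableSet]
  simp_rw [h.volume_innerNbhd_generator hε, h.cthickening_inter_image_hull, h.volume_image]

lemma sum_ratio_pow_mul_volume_hull_add (h : IsSelfSimilarTiling φ r F G) :
    volume.real (convexHull ℝ F) =
      (∑ j, r j ^ d) * volume.real (convexHull ℝ F) + ∑ q, volume.real (G q) := by
  simpa only [univ_inter, h.volume_image, Finset.sum_mul] using
    h.volume_inter_hull MeasurableSet.univ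

end IsSelfSimilarTiling

section LogRescale

open Real Set Topology

lemma tendsto_one_div_mul_integral_zero {E : ℝ → ℝ} (hE : IntegrableOn E (Ioi 0)) :
    Tendsto (fun T => 1 / T * ∫ t in (0 : ℝ)..T, E t) atTop (𝓝 0) := by
  simpa using tendsto_inv_atTop_zero.mul (intervalIntegral_tendsto_integral_Ioi 0 hE tendsto_id)

/-- The function `ε ↦ ε^{-α} V(ε)` in the logarithmic variable `t = -log ε`. -/
noncomputable def logRescale (α : ℝ) (V : ℝ → ℝ) (t : ℝ) : ℝ :=
  exp (α * t) * V (exp (-t))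

namespace logRescale

variable {α ε r t T K : ℝ} {V W : ℝ → ℝ}

lemma neg_log (hε : 0 < ε) : logRescale α V (-log ε) = V ε * ε ^ (-α) := by
  rw [logRescale, neg_neg, exp_log hε, rpow_def_of_pos hε, mul_comm]
  ring_nf

lemma eq_mul_rpow : logRescale α V t = V (exp (-t)) * exp (-t) ^ (-α) := by
  rw [← neg_log (exp_pos _), log_exp, neg_neg]

lemma tendsto_atTop_iff {l : Filter ℝ} :
    Tendsto (logRescale α V) atTop l ↔ Tendsto (fun ε => V ε * ε ^ (-α)) (𝓝[>] 0) l := by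
  constructor <;> intro h
  · refine (h.comp (tendsto_neg_atBot_atTop.comp tendsto_log_nhdsGT_zero)).congr' ?_
    filter_upwards [self_mem_nhdsWithin] with ε hε using neg_log hε
  · refine (h.comp (tendsto_nhdsWithin_iff.2
      ⟨tendsto_exp_neg_atTop_nhds_zero, .of_forall fun t => exp_pos _⟩)).congr fun t => ?_
    exact eq_mul_rpow.symm

lemma image_exp_neg_Ico (hT : 0 < T) :
    (fun t => exp (-t)) '' Ico 0 (log T) = Ioc (1 / T) 1 := by
  ext ε
  constructor
  · rintro ⟨t, ⟨ht₀, htT⟩, rfl⟩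
    refine ⟨?_, exp_le_one_iff.2 (by linarith)⟩
    rw [one_div, ← exp_log hT, ← exp_neg]
    exact exp_lt_exp.2 (neg_lt_neg htT)
  · rintro ⟨hεT, hε₁⟩
    have hε : 0 < ε := (by positivity : 0 < 1 / T).trans hεT
    refine ⟨-log ε, ⟨neg_nonneg.2 (log_nonpos hε.le hε₁), ?_⟩, by simp [exp_log hε]⟩
    rw [neg_lt, ← log_inv, ← one_div]
    exact log_lt_log (by positivity) hεT

lemma setIntegral_Ioc_eq (α : ℝ) (V : ℝ → ℝ) (hT : 1 ≤ T) :
    ∫ ε in Ioc (1 / T) 1, ε ^ (-α) * V ε / ε = ∫ t in (0 : ℝ)..log T, logRescale α V t := by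
  rw [← image_exp_neg_Ico (by linarith), integral_image_eq_integral_abs_deriv_smul
    (f' := fun t => -exp (-t)) measurableSet_Ico
    (fun t _ => by simpa using ((hasDerivAt_neg t).exp).hasDerivWithinAt)
    (fun x _ y _ hxy => neg_injective (exp_injective hxy)),
    intervalIntegral.integral_of_le (log_nonneg hT), ← integral_Ico_eq_integral_Ioc]
  refine setIntegral_congr_fun measurableSet_Ico fun t _ => ?_
  simp only [abs_neg, abs_of_pos (exp_pos _), smul_eq_mul, eq_mul_rpow]
  field_simp

lemma antitone_comp_exp_neg (hV : Monotone V) : Antitone fun t => V (exp (-t)) :=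
  hV.comp_antitone fun _ _ hst => exp_le_exp.2 (neg_le_neg hst)

lemma measurable (hV : Monotone V) : Measurable (logRescale α V) :=
  (by fun_prop : Measurable fun t => exp (α * t)).mul (antitone_comp_exp_neg hV).measurable

lemma intervalIntegrable (hV : Monotone V) (a b : ℝ) :
    IntervalIntegrable (logRescale α V) volume a b :=
  (antitone_comp_exp_neg hV).intervalIntegrable.continuousOn_mul (by fun_prop)

lemma antitone_exp_neg_mul (α : ℝ) (hV : Monotone V) :
    Antitone fun t => exp (-(α * t)) * logRescale α V t := by
  simp only [logRescale, ← mul_assoc, ← exp_add, neg_add_cancel, exp_zero, one_mul]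
  exact antitone_comp_exp_neg hV

lemma comp_div (α : ℝ) (V : ℝ → ℝ) (hr : 0 < r) (t : ℝ) :
    logRescale α (fun ε => V (ε / r)) t = r ^ (-α) * logRescale α V (t - log r⁻¹) := by
  have delay : exp (-(t - log r⁻¹)) = exp (-t) / r := by
    rw [neg_sub, sub_eq_neg_add, exp_add, exp_log (inv_pos.2 hr), div_eq_mul_inv]
  rw [logRescale, logRescale, delay, rpow_def_of_pos hr, ← mul_assoc, ← exp_add, log_inv]
  ring_nf

lemma abs_sub_le (hVW : ∀ ε ∈ Ioc (0 : ℝ) 1, |V ε - W ε| ≤ K * ε) (ht : 0 ≤ t) :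
    |logRescale α V t - logRescale α W t| ≤ K * exp ((α - 1) * t) := by
  rw [logRescale, logRescale, ← mul_sub, abs_mul, abs_of_pos (exp_pos _)]
  calc exp (α * t) * |V (exp (-t)) - W (exp (-t))| ≤ exp (α * t) * (K * exp (-t)) := by
        gcongr
        exact hVW _ ⟨exp_pos _, exp_le_one_iff.2 (by linarith)⟩
    _ = K * exp ((α - 1) * t) := by
        rw [mul_left_comm, ← exp_add]
        ring_nf

lemma tendsto_sub_zero (hα : α < 1) (hVW : ∀ ε ∈ Ioc (0 : ℝ) 1, |V ε - W ε| ≤ K * ε) :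
    Tendsto (fun t => logRescale α V t - logRescale α W t) atTop (𝓝 0) := by
  have decay : Tendsto (fun t => exp ((α - 1) * t)) atTop (𝓝 0) :=
    tendsto_exp_atBot.comp (tendsto_id.const_mul_atTop_of_neg (by linarith))
  refine squeeze_zero_norm' ?_ (by simpa using decay.const_mul K)
  filter_upwards [eventually_ge_atTop 0] with t ht using abs_sub_le hVW ht

lemma tendsto_average_sub_zero (hα : α < 1) (hV : Monotone V) (hW : Monotone W)
    (hVW : ∀ ε ∈ Ioc (0 : ℝ) 1, |V ε - W ε| ≤ K * ε) :
    Tendsto (fun T => 1 / T * ∫ t in (0 : ℝ)..T, (logRescale α V t - logRescale α W t)) atTop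
      (𝓝 0) := by
  refine tendsto_one_div_mul_integral_zero (Integrable.mono'
    ((integrableOn_exp_mul_Ioi (by linarith : α - 1 < 0) 0).const_mul K) ?_ ?_)
  · exact ((measurable hV).sub (measurable hW)).aestronglyMeasurable
  · filter_upwards [ae_restrict_mem measurableSet_Ioi] with t ht using abs_sub_le hVW (le_of_lt ht)

end logRescale

end LogRescale

/-- A set `G` is diphase Steiner-like with inradius `g` and coefficients `κ`: the volume of its
inner `ε`-neighborhood is `∑_{m<d} κₘ ε^{d-m}` for `ε < g` and `vol G = -κ_d` for `ε ≥ g`. Of the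
inradius only its role as the threshold `g > 0` is recorded. -/
structure IsDiphase {d : ℕ} (G : Set (EuclideanSpace ℝ (Fin d))) (g : ℝ) (κ : ℕ → ℝ) : Prop where
  inradius_pos : 0 < g
  volume_innerNbhd_of_lt (ε : ℝ) : 0 < ε → ε < g →
    volume.real (innerNbhd G ε) = ∑ m ∈ Finset.range d, κ m * ε ^ ((d : ℝ) - m)
  volume_innerNbhd_of_le (ε : ℝ) : g ≤ ε → volume.real (innerNbhd G ε) = -κ d
  volume_eq : volume.real G = -κ d

lemma IsDiphase.logRescale_volume_innerNbhd {d : ℕ} {G : Set (EuclideanSpace ℝ (Fin d))} {g : ℝ}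
    {κ : ℕ → ℝ} (h : IsDiphase G g κ) (D : ℝ) :
    logRescale (d - D) (fun ε => volume.real (innerNbhd G ε)) =
      diphaseProfile d D (-Real.log g) κ := by
  ext t
  rw [logRescale, diphaseProfile]
  split_ifs with ht
  · rw [h.volume_innerNbhd_of_lt _ (Real.exp_pos _)
      ((Real.lt_log_iff_exp_lt h.inradius_pos).1 (neg_lt.1 ht)), Finset.mul_sum]
    refine Finset.sum_congr rfl fun m _ => ?_
    rw [← Real.exp_mul, mul_left_comm, ← Real.exp_add]
    ring_nf
  · rw [h.volume_innerNbhd_of_le _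
      ((Real.log_le_iff_le_exp h.inradius_pos).1 (le_neg.1 (not_lt.1 ht))), mul_comm]

/-- The parallel volume `V_F(ε)` of a set `F`. -/
noncomputable def parallelVolume {d : ℕ} (F : Set (EuclideanSpace ℝ (Fin d))) (ε : ℝ) : ℝ :=
  volume.real (Metric.cthickening ε F)

/-- The contribution to the parallel volume `V_F(ε)` of the convex hull of `F`. -/
noncomputable def hullParallelVolume {d : ℕ} (F : Set (EuclideanSpace ℝ (Fin d))) (ε : ℝ) : ℝ :=
  volume.real (Metric.cthickening ε F ∩ convexHull ℝ F)

/-- The closed formula `(∑_q ∑_{m≤d} g_q^{D-m}/(D-m) κₘ(G_q)) / ∑_j r_j^D log r_j⁻¹` for the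
(average) Minkowski content. -/
noncomputable def contentFormula {ι ν : Type*} [Fintype ι] [Fintype ν] (d : ℕ) (D : ℝ)
    (r : ι → ℝ) (g : ν → ℝ) (κ : ν → ℕ → ℝ) : ℝ :=
  (∑ q, ∑ m ∈ Finset.range (d + 1), g q ^ (D - (m : ℝ)) / (D - (m : ℝ)) * κ q m) /
    ∑ j, r j ^ D * Real.log (r j)⁻¹

lemma monotone_parallelVolume {d : ℕ} {F : Set (EuclideanSpace ℝ (Fin d))}
    (hF : Bornology.IsBounded F) : Monotone (parallelVolume F) := fun _ _ hε =>
  measureReal_mono (Metric.cthickening_mono hε F) hF.cthickening.measure_lt_top.ne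

lemma monotone_hullParallelVolume {d : ℕ} {F : Set (EuclideanSpace ℝ (Fin d))}
    (hF : Bornology.IsBounded F) : Monotone (hullParallelVolume F) := fun _ ε hε =>
  measureReal_mono (Set.inter_subset_inter_left _ (Metric.cthickening_mono hε F))
    (measure_ne_top_of_subset Set.inter_subset_left
      (hF.cthickening (δ := ε)).measure_lt_top.ne)

section Lattice

open Set

lemma closure_range_log_inv {ι : Type*} (r : ι → ℝ) :
    AddSubgroup.closure (range fun j => Real.log (r j)⁻¹) =
      AddSubgroup.closure (range fun j => Real.log (r j)) := by
  rw [← AddSubgroup.closure_neg, ← image_neg_eq_neg, ← range_comp]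
  simp [Function.comp_def]

lemma exists_eq_natCast_mul_of_closure_eq {ι : Type*} [Nonempty ι] {τ : ι → ℝ}
    (hτ : ∀ j, 0 < τ j) {a : ℝ}
    (ha : AddSubgroup.closure (range τ) = AddSubgroup.closure {a}) :
    0 < |a| ∧ ∃ n : ι → ℕ, ∀ j, τ j = n j * |a| := by
  have multiple j : ∃ n : ℤ, n • a = τ j :=
    AddSubgroup.mem_closure_singleton.1 (ha ▸ AddSubgroup.subset_closure (mem_range_self j))
  choose n hn using multiple
  refine ⟨abs_pos.2 ?_, fun j => (n j).natAbs, fun j => ?_⟩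
  · rintro rfl
    obtain ⟨j⟩ := ‹Nonempty ι›
    exact (hτ j).ne (by rw [← hn, smul_zero])
  · rw [← abs_of_pos (hτ j), ← hn, zsmul_eq_mul, abs_mul, Nat.cast_natAbs, Int.cast_abs]

end Lattice

namespace IsSelfSimilarTiling

open Set Metric Topology

variable {d : ℕ} {ι ν : Type*} {φ : ι → EuclideanSpace ℝ (Fin d) → EuclideanSpace ℝ (Fin d)}
  {r : ι → ℝ} {F : Set (EuclideanSpace ℝ (Fin d))} {G : ν → Set (EuclideanSpace ℝ (Fin d))}
  {g : ν → ℝ} {κ : ν → ℕ → ℝ} {D a M : ℝ}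

lemma log_inv_ratio_pos (h : IsSelfSimilarTiling φ r F G) (j : ι) : 0 < Real.log (r j)⁻¹ :=
  Real.log_pos ((one_lt_inv₀ (h.ratio_pos j)).2 (h.ratio_lt_one j))

lemma nonempty_index (h : IsSelfSimilarTiling φ r F G) : Nonempty ι := by
  obtain ⟨x, hx⟩ := h.set_nonempty
  rw [h.eq_iUnion_image] at hx
  exact ⟨(mem_iUnion.1 hx).choose⟩

lemma exists_abs_parallelVolume_sub_le (h : IsSelfSimilarTiling φ r F G) :
    ∃ K, ∀ ε ∈ Ioc (0 : ℝ) 1, |parallelVolume F ε - hullParallelVolume F ε| ≤ K * ε := by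
  obtain ⟨K, hK⟩ := exists_measureReal_cthickening_le volume (convex_convexHull ℝ F)
    h.isCompact_hull h.interior_nonempty
  refine ⟨K, fun ε hε => ?_⟩
  have hull_measurable := h.isClosed_hull.measurableSet
  have split_F : parallelVolume F ε = hullParallelVolume F ε +
      volume.real (cthickening ε F \ convexHull ℝ F) :=
    (measureReal_inter_add_sdiff hull_measurable h.isBounded.cthickening.measure_lt_top.ne).symm
  have finite_hull : volume (cthickening ε (convexHull ℝ F)) ≠ ⊤ :=
    h.isCompact_hull.isBounded.cthickening.measure_lt_top.ne
  have outer_le : volume.real (cthickening ε F \ convexHull ℝ F) ≤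
      volume.real (cthickening ε (convexHull ℝ F)) - volume.real (convexHull ℝ F) := by
    rw [← measureReal_sdiff (self_subset_cthickening _) hull_measurable finite_hull]
    exact measureReal_mono (sdiff_subset_sdiff_left
      (cthickening_subset_of_subset ε (subset_convexHull ℝ F)))
      (measure_ne_top_of_subset sdiff_subset finite_hull)
  rw [split_F, add_sub_cancel_left, abs_of_nonneg measureReal_nonneg]
  linarith [hK ε hε]

lemma tendsto_logRescale_sub_zero (h : IsSelfSimilarTiling φ r F G) (hD : (d : ℝ) - 1 < D) :
    Tendsto (fun t => logRescale (d - D) (parallelVolume F) t -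
      logRescale (d - D) (hullParallelVolume F) t) atTop (𝓝 0) := by
  obtain ⟨K, hK⟩ := h.exists_abs_parallelVolume_sub_le
  exact logRescale.tendsto_sub_zero (by linarith) hK

variable [Fintype ι]

lemma moran_exponent_lt [Finite ν] [Nonempty ν] (h : IsSelfSimilarTiling φ r F G)
    (hmoran : ∑ j, r j ^ D = 1) : D < d := by
  cases nonempty_fintype ν
  by_contra! hdD
  have sum_ge_one : 1 ≤ ∑ j, r j ^ d := by
    rw [← hmoran]
    refine Finset.sum_le_sum fun j _ => ?_
    rw [← Real.rpow_natCast]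
    exact Real.rpow_le_rpow_of_exponent_ge (h.ratio_pos j) (h.ratio_lt_one j).le hdD
  have generators_pos : 0 < ∑ q, volume.real (G q) :=
    Finset.sum_pos (fun q _ => h.volume_generator_pos q) Finset.univ_nonempty
  nlinarith [h.sum_ratio_pow_mul_volume_hull_add, h.volume_hull_pos]

lemma logRescale_hullParallelVolume [Fintype ν] (h : IsSelfSimilarTiling φ r F G)
    (hG : ∀ q, IsDiphase (G q) (g q) (κ q)) (D t : ℝ) :
    logRescale (d - D) (hullParallelVolume F) t =
      ∑ j, r j ^ D * logRescale (d - D) (hullParallelVolume F) (t - Real.log (r j)⁻¹) +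
        ∑ q, diphaseProfile d D (-Real.log (g q)) (κ q) t := by
  have piece j : Real.exp ((d - D) * t) * (r j ^ d * hullParallelVolume F (Real.exp (-t) / r j)) =
      r j ^ D * logRescale (d - D) (hullParallelVolume F) (t - Real.log (r j)⁻¹) := by
    have weight : r j ^ D = r j ^ d * r j ^ (-(d - D)) := by
      rw [← Real.rpow_natCast, ← Real.rpow_add (h.ratio_pos j)]
      ring_nf
    rw [weight, mul_assoc, ← logRescale.comp_div _ _ (h.ratio_pos j), logRescale, mul_left_comm]
  rw [logRescale, hullParallelVolume, h.volume_cthickening_inter_hull (Real.exp_pos _).le, mul_add,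
    Finset.mul_sum, Finset.mul_sum]
  simp only [← piece, ← (hG _).logRescale_volume_innerNbhd]
  rfl

theorem renewalEquation [Fintype ν] [Nonempty ν]
    (h : IsSelfSimilarTiling φ r F G) (hG : ∀ q, IsDiphase (G q) (g q) (κ q))
    (hmoran : ∑ j, r j ^ D = 1) (hD : (d : ℝ) - 1 < D) :
    RenewalEquation (fun j => r j ^ D) (fun j => Real.log (r j)⁻¹)
      (logRescale (d - D) (hullParallelVolume F))
      (fun t => ∑ q, diphaseProfile d D (-Real.log (g q)) (κ q) t) (d - D) where
  weight_pos j := Real.rpow_pos_of_pos (h.ratio_pos j) D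
  weight_sum := hmoran
  delay_pos := h.log_inv_ratio_pos
  rate_pos := sub_pos.2 (h.moran_exponent_lt hmoran)
  nonneg _ := mul_nonneg (Real.exp_pos _).le measureReal_nonneg
  equation := h.logRescale_hullParallelVolume hG D
  antitone := logRescale.antitone_exp_neg_mul _ (monotone_hullParallelVolume h.isBounded)
  growth := ⟨volume.real (convexHull ℝ F), fun t => (mul_comm _ _).trans_le
    (mul_le_mul_of_nonneg_right
      (measureReal_mono inter_subset_right h.isCompact_hull.measure_ne_top) (Real.exp_pos _).le)⟩
  decay := by
    choose K hK using fun q => (⟨_, diphaseProfile.abs_le d D (-Real.log (g q)) (κ q)⟩ :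
      ∃ K, ∀ t, |diphaseProfile d D (-Real.log (g q)) (κ q) t| ≤
        K * Real.exp (-((D - d + 1) * t)))
    refine ⟨D - d + 1, by linarith, ∑ q, K q, fun t =>
      (Finset.abs_sum_le_sum_abs _ _).trans ?_⟩
    rw [Finset.sum_mul]
    exact Finset.sum_le_sum fun q _ => hK q t

lemma integral_sum_diphaseProfile [Fintype ν] [Nonempty ν]
    (h : IsSelfSimilarTiling φ r F G) (hG : ∀ q, IsDiphase (G q) (g q) (κ q))
    (hmoran : ∑ j, r j ^ D = 1) (hD : (d : ℝ) - 1 < D) :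
    ∫ t, ∑ q, diphaseProfile d D (-Real.log (g q)) (κ q) t =
      ∑ q, ∑ m ∈ Finset.range (d + 1), g q ^ (D - (m : ℝ)) / (D - (m : ℝ)) * κ q m := by
  have profile q := diphaseProfile.integrable_and_integral_eq (b := -Real.log (g q)) (κ := κ q)
    hD (h.moran_exponent_lt hmoran)
  rw [integral_finsetSum _ fun q _ => (profile q).1]
  refine Finset.sum_congr rfl fun q _ => (profile q).2.trans (Finset.sum_congr rfl fun m _ => ?_)
  rw [Real.rpow_def_of_pos (hG q).inradius_pos]
  ring_nf

lemma integral_sum_diphaseProfile_pos [Fintype ν] [Nonempty ν]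
    (h : IsSelfSimilarTiling φ r F G) (hG : ∀ q, IsDiphase (G q) (g q) (κ q))
    (hmoran : ∑ j, r j ^ D = 1) (hD : (d : ℝ) - 1 < D) :
    0 < ∫ t, ∑ q, diphaseProfile d D (-Real.log (g q)) (κ q) t := by
  have profile_nonneg q t : 0 ≤ diphaseProfile d D (-Real.log (g q)) (κ q) t := by
    rw [← (hG q).logRescale_volume_innerNbhd]
    exact mul_nonneg (Real.exp_pos _).le measureReal_nonneg
  have profile_pos q {t} (ht : t ≤ -Real.log (g q)) :
      0 < diphaseProfile d D (-Real.log (g q)) (κ q) t := by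
    rw [diphaseProfile, if_neg (not_lt.2 ht), ← (hG q).volume_eq]
    exact mul_pos (h.volume_generator_pos q) (Real.exp_pos _)
  obtain ⟨q₀⟩ := ‹Nonempty ν›
  rw [integral_pos_iff_support_of_nonneg
    (fun t => Finset.sum_nonneg fun q _ => profile_nonneg q t)
    (h.renewalEquation hG hmoran hD).integrable_source]
  refine (by simp : 0 < volume (Iic (-Real.log (g q₀)))).trans_le (measure_mono fun t ht => ?_)
  exact (Finset.sum_pos' (fun q _ => profile_nonneg q t)
    ⟨q₀, Finset.mem_univ q₀, profile_pos q₀ ht⟩).ne'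

lemma contentFormula_eq [Fintype ν] [Nonempty ν]
    (h : IsSelfSimilarTiling φ r F G) (hG : ∀ q, IsDiphase (G q) (g q) (κ q))
    (hmoran : ∑ j, r j ^ D = 1) (hD : (d : ℝ) - 1 < D) :
    contentFormula d D r g κ = (∫ t, ∑ q, diphaseProfile d D (-Real.log (g q)) (κ q) t) /
      ∑ j, r j ^ D * Real.log (r j)⁻¹ := by
  rw [contentFormula, h.integral_sum_diphaseProfile hG hmoran hD]

lemma contentFormula_pos [Fintype ν] [Nonempty ν]
    (h : IsSelfSimilarTiling φ r F G) (hG : ∀ q, IsDiphase (G q) (g q) (κ q))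
    (hmoran : ∑ j, r j ^ D = 1) (hD : (d : ℝ) - 1 < D) :
    0 < contentFormula d D r g κ := by
  rw [h.contentFormula_eq hG hmoran hD]
  exact div_pos (h.integral_sum_diphaseProfile_pos hG hmoran hD)
    (h.renewalEquation hG hmoran hD).mean_delay_pos

theorem tendsto_content_of_dense [Fintype ν] [Nonempty ν]
    (h : IsSelfSimilarTiling φ r F G) (hG : ∀ q, IsDiphase (G q) (g q) (κ q))
    (hmoran : ∑ j, r j ^ D = 1) (hD : (d : ℝ) - 1 < D)
    (hdense : Dense (AddSubgroup.closure (range fun j => Real.log (r j)) : Set ℝ)) :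
    Tendsto (fun ε => parallelVolume F ε * ε ^ (D - d)) (𝓝[>] 0)
      (𝓝 (contentFormula d D r g κ)) := by
  rw [← closure_range_log_inv] at hdense
  have limit := (h.tendsto_logRescale_sub_zero hD).add
    ((h.renewalEquation hG hmoran hD).tendsto_of_dense hdense)
  simp only [sub_add_cancel, zero_add, ← h.contentFormula_eq hG hmoran hD] at limit
  simpa only [neg_sub] using logRescale.tendsto_atTop_iff.1 limit

theorem eq_zero_of_tendsto_content [Finite ν] [Nonempty ν]
    (h : IsSelfSimilarTiling φ r F G) (hG : ∀ q, IsDiphase (G q) (g q) (κ q))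
    (hmoran : ∑ j, r j ^ D = 1) (hD : (d : ℝ) - 1 < D)
    (ha : AddSubgroup.closure (range fun j => Real.log (r j)) = AddSubgroup.closure {a})
    (hM : Tendsto (fun ε => parallelVolume F ε * ε ^ (D - d)) (𝓝[>] 0) (𝓝 M)) : M = 0 := by
  cases nonempty_fintype ν
  have renewal := h.renewalEquation hG hmoran hD
  have := h.nonempty_index
  rw [← closure_range_log_inv] at ha
  obtain ⟨ha_pos, n, hn⟩ := exists_eq_natCast_mul_of_closure_eq h.log_inv_ratio_pos ha
  rw [← neg_sub, ← logRescale.tendsto_atTop_iff] at hM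
  have hull_limit := hM.sub (h.tendsto_logRescale_sub_zero hD)
  simp only [sub_sub_cancel, sub_zero] at hull_limit
  have periodization_zero : M * (∑ j, r j ^ D * Real.log (r j)⁻¹) / |a| = 0 :=
    diphaseProfile.eq_zero_of_hasSum_imp_eq ha_pos hD (h.moran_exponent_lt hmoran) _ _
      fun t S hS => eq_div_of_mul_eq ha_pos.ne'
        (renewal.mul_eq_of_hasSum_of_tendsto ha_pos hn hull_limit hS)
  exact (mul_eq_zero.1 ((div_eq_zero_iff.1 periodization_zero).resolve_right
    ha_pos.ne')).resolve_right renewal.mean_delay_pos.ne'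

theorem tendsto_average_content [Fintype ν] [Nonempty ν]
    (h : IsSelfSimilarTiling φ r F G) (hG : ∀ q, IsDiphase (G q) (g q) (κ q))
    (hmoran : ∑ j, r j ^ D = 1) (hD : (d : ℝ) - 1 < D) :
    Tendsto (fun T => 1 / Real.log T *
      ∫ ε in Ioc (1 / T) 1, ε ^ (D - d) * parallelVolume F ε / ε) atTop
      (𝓝 (contentFormula d D r g κ)) := by
  have renewal := h.renewalEquation hG hmoran hD
  have parallel_mono := monotone_parallelVolume h.isBounded
  obtain ⟨K, hK⟩ := h.exists_abs_parallelVolume_sub_le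
  have error := logRescale.tendsto_average_sub_zero (by linarith : (d : ℝ) - D < 1) parallel_mono
    (monotone_hullParallelVolume h.isBounded) hK
  have average := error.add renewal.tendsto_average
  rw [zero_add, ← h.contentFormula_eq hG hmoran hD] at average
  refine (average.comp Real.tendsto_log_atTop).congr' ?_
  filter_upwards [eventually_ge_atTop 1] with T hT
  have change_variables := logRescale.setIntegral_Ioc_eq (d - D) (parallelVolume F) hT
  rw [neg_sub] at change_variables
  rw [Function.comp_apply, ← mul_add, change_variables, intervalIntegral.integral_sub
    (logRescale.intervalIntegrable parallel_mono _ _) (renewal.intervalIntegrable _ _),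
    sub_add_cancel]

end IsSelfSimilarTiling

theorem stmt_2_general {d : ℕ} {ι ν : Type*} [Fintype ι] [Fintype ν] [Nonempty ν]
    {φ : ι → EuclideanSpace ℝ (Fin d) → EuclideanSpace ℝ (Fin d)} {r : ι → ℝ}
    {F : Set (EuclideanSpace ℝ (Fin d))} {G : ν → Set (EuclideanSpace ℝ (Fin d))}
    {g : ν → ℝ} {κ : ν → ℕ → ℝ} {D : ℝ} (h : IsSelfSimilarTiling φ r F G)
    (hG : ∀ q, IsDiphase (G q) (g q) (κ q)) (hmoran : ∑ j, r j ^ D = 1)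
    (hD : (d : ℝ) - 1 < D) :
    (Dense (AddSubgroup.closure (Set.range fun j => Real.log (r j)) : Set ℝ) →
      0 < contentFormula d D r g κ ∧
      Tendsto (fun ε => parallelVolume F ε * ε ^ (D - d)) (nhdsWithin 0 (Set.Ioi 0))
        (nhds (contentFormula d D r g κ))) ∧
    ((∃ a : ℝ, AddSubgroup.closure (Set.range fun j => Real.log (r j)) =
        AddSubgroup.closure {a}) →
      (¬ ∃ M : ℝ, 0 < M ∧ Tendsto (fun ε => parallelVolume F ε * ε ^ (D - d))
        (nhdsWithin 0 (Set.Ioi 0)) (nhds M)) ∧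
      Tendsto (fun T => 1 / Real.log T *
        ∫ ε in Set.Ioc (1 / T) 1, ε ^ (D - d) * parallelVolume F ε / ε) atTop
        (nhds (contentFormula d D r g κ))) :=
  ⟨fun hdense =>
      ⟨h.contentFormula_pos hG hmoran hD, h.tendsto_content_of_dense hG hmoran hD hdense⟩,
    fun ⟨_, ha⟩ => ⟨fun ⟨_, hM_pos, hM⟩ =>
      hM_pos.ne' (h.eq_zero_of_tendsto_content hG hmoran hD ha hM),
      h.tendsto_average_content hG hmoran hD⟩⟩

/-- the main theorem with finitely many generators `G₁, …, G_Q`.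
If the IFS is non-lattice then `F` is Minkowski measurable with content
`(∑_q ∑_m (g_q^{D-m}/(D-m)) κₘ(G_q)) / (∑_j r_j^D log r_j⁻¹)`; if it is of
lattice type then `F` is not Minkowski measurable but the average Minkowski
content exists and equals the same expression. -/
theorem stmt_2
    (d J Q : ℕ) (hd : 1 ≤ d) (hJ : 2 ≤ J) (hQ : 1 ≤ Q)
    (φ : Fin J → EuclideanSpace ℝ (Fin d) → EuclideanSpace ℝ (Fin d))
    (r : Fin J → ℝ) (hr0 : ∀ j, 0 < r j) (hr1 : ∀ j, r j < 1)
    (hsim : ∀ j x y, dist (φ j x) (φ j y) = r j * dist x y)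
    (F : Set (EuclideanSpace ℝ (Fin d)))
    (hFcpt : IsCompact F) (hFne : F.Nonempty)
    (hFinv : F = ⋃ j, φ j '' F)
    (D : ℝ) (hD : ∑ j, r j ^ D = 1)
    (C : Set (EuclideanSpace ℝ (Fin d))) (hC : C = convexHull ℝ F)
    (hdim : (interior C).Nonempty)
    (hTSC₁ : ∀ j, φ j '' interior C ⊆ interior C)
    (hTSC₂ : ∀ j k, j ≠ k → Disjoint (φ j '' interior C) (φ k '' interior C))
    (hNTC : ¬ interior C ⊆ ⋃ j, φ j '' C)
    (hPWC : frontier C ⊆ F)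
    (hDd : (d : ℝ) - 1 < D)
    -- T₀ = C \ Φ(C) has connected components G₁, …, G_Q
    (G : Fin Q → Set (EuclideanSpace ℝ (Fin d)))
    (hG : (⋃ q, G q) = C \ ⋃ j, φ j '' C)
    (hGopen : ∀ q, IsOpen (G q)) (hGbdd : ∀ q, Bornology.IsBounded (G q))
    (hGconn : ∀ q, IsConnected (G q))
    (hGdisj : ∀ q q', q ≠ q' → Disjoint (G q) (G q'))
    -- each G_q is diphase Steiner-like with inradius g_q and coefficients κₘ(G_q)
    (g : Fin Q → ℝ) (hg : ∀ q, 0 < g q)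
    (hginr : ∀ q, IsLUB {ρ : ℝ | ∃ x, Metric.ball x ρ ⊆ G q} (g q))
    (κ : Fin Q → ℕ → ℝ)
    (hSt₁ : ∀ q, ∀ ε : ℝ, 0 < ε → ε < g q →
      (volume (innerNbhd (G q) ε)).toReal = ∑ m ∈ Finset.range d, κ q m * ε ^ ((d : ℝ) - m))
    (hSt₂ : ∀ q, ∀ ε : ℝ, g q ≤ ε → (volume (innerNbhd (G q) ε)).toReal = -κ q d)
    (hGvol : ∀ q, (volume (G q)).toReal = -κ q d) :
    -- non-lattice case
    (Dense ((AddSubgroup.closure (Set.range fun j => Real.log (r j)) :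
        AddSubgroup ℝ) : Set ℝ) →
      0 < (∑ q, ∑ m ∈ Finset.range (d + 1), g q ^ (D - (m : ℝ)) / (D - (m : ℝ)) * κ q m) /
          (∑ j, r j ^ D * Real.log (r j)⁻¹) ∧
      Tendsto (fun ε : ℝ => (volume (Metric.cthickening ε F)).toReal * ε ^ (D - (d : ℝ)))
        (nhdsWithin 0 (Set.Ioi 0))
        (nhds ((∑ q, ∑ m ∈ Finset.range (d + 1), g q ^ (D - (m : ℝ)) / (D - (m : ℝ)) * κ q m) /
          (∑ j, r j ^ D * Real.log (r j)⁻¹)))) ∧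
    -- lattice case
    ((∃ a : ℝ, AddSubgroup.closure (Set.range fun j => Real.log (r j)) =
        AddSubgroup.closure {a}) →
      (¬ ∃ M : ℝ, 0 < M ∧
        Tendsto (fun ε : ℝ => (volume (Metric.cthickening ε F)).toReal * ε ^ (D - (d : ℝ)))
          (nhdsWithin 0 (Set.Ioi 0)) (nhds M)) ∧
      Tendsto (fun T : ℝ => (1 / Real.log T) *
          ∫ ε in Set.Ioc (1 / T) 1,
            ε ^ (D - (d : ℝ)) * (volume (Metric.cthickening ε F)).toReal / ε)
        atTop
        (nhds ((∑ q, ∑ m ∈ Finset.range (d + 1), g q ^ (D - (m : ℝ)) / (D - (m : ℝ)) * κ q m) /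
          (∑ j, r j ^ D * Real.log (r j)⁻¹)))) := by
  subst hC
  have tiling : IsSelfSimilarTiling φ r F G :=
    ⟨hr0, hr1, hsim, hFcpt.isBounded, hFinv, hdim, hTSC₁, hTSC₂, hPWC, hGopen,
      fun q => (hGconn q).nonempty, hGdisj, hG⟩
  have : Nonempty (Fin Q) := ⟨⟨0, hQ⟩⟩
  exact stmt_2_general tiling (fun q => ⟨hg q, hSt₁ q, hSt₂ q, hGvol q⟩) hD hDd
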